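/- arXiv:2402.13893 — 4 statements merged into one kernel-verified Lean document; each statement's English description precedes it below -/
import Mathlib

section
/- For every odd integer n ≥ 3, m(n,2) = (n+3)/2. -/
/-- The Weyl group orbit `J(n,j)` of the `j`-th fundamental weight of `SU(n)`:
vectors `(∑_{i ∈ A} e_i) - (j/n)·(e_1 + … + e_n)` for `j`-element subsets `A` of `{1,…,n}`. -/
def fundWeightOrbit (n j : ℕ) : Set (Fin n → ℝ) :=
  {v | ∃ A : Finset (Fin n), A.card = j ∧
      v = fun i => (if i ∈ A then (1 : ℝ) else 0) - (j : ℝ) / (n : ℝ)}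

/-- `m(n,j)`: the minimal cardinality of a finite subset `T ⊆ J(n,j)` with `0 ∈ Conv(T)`. -/
noncomputable def minCardZeroConv (n j : ℕ) : ℕ :=
  sInf {k | ∃ T : Finset (Fin n → ℝ), ↑T ⊆ fundWeightOrbit n j ∧ T.card = k ∧
    (0 : Fin n → ℝ) ∈ convexHull ℝ (T : Set (Fin n → ℝ))}

theorem edges_lower {ι : Type*} [DecidableEq ι] (n : ℕ) (hodd : Odd n) (T : Finset ι)
    (A : ι → Finset (Fin n)) (hinj : ∀ e ∈ T, ∀ f ∈ T, A e = A f → e = f)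
    (hcard : ∀ e ∈ T, (A e).card = 2) (x : ι → ℝ) (hx : ∀ e ∈ T, 0 ≤ x e)
    (hsum : ∀ i, ∑ e ∈ T, (if i ∈ A e then x e else 0) = 1) : n + 3 ≤ 2 * T.card := by
  have htot : 2 * ∑ e ∈ T, x e = n := by
    have h1 : ∑ i : Fin n, ∑ e ∈ T, (if i ∈ A e then x e else 0) = n := by
      simp [hsum]
    rw [Finset.sum_comm] at h1
    rw [← h1, Finset.mul_sum]
    refine Finset.sum_congr rfl fun e he => ?_
    simp [hcard e he]
  have hle : ∀ e ∈ T, x e ≤ 1 := by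
    intro e he
    have hne : (A e).Nonempty := by
      rw [← Finset.card_pos, hcard e he]; norm_num
    obtain ⟨u, hu⟩ := hne
    have := Finset.single_le_sum (f := fun e => if u ∈ A e then x e else 0)
      (fun f hf => by split_ifs; exacts [hx f hf, le_rfl]) he
    rw [hsum u] at this
    simpa [hu] using this
  -- another edge at a vertex
  have hother : ∀ e ∈ T, 0 < x e → x e < 1 → ∀ u v, u ≠ v → u ∈ A e → v ∈ A e →
      ∃ f ∈ T, f ≠ e ∧ u ∈ A f ∧ v ∉ A f ∧ x f ≤ 1 - x e := by
    intro e he h0 h1 u v huv hu hv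
    have hs := hsum u
    rw [← Finset.add_sum_erase T _ he, if_pos hu] at hs
    have hpos : 0 < ∑ f ∈ T.erase e, (if u ∈ A f then x f else 0) := by linarith
    obtain ⟨f, hf, hf0⟩ := Finset.exists_ne_zero_of_sum_ne_zero hpos.ne'
    have huf : u ∈ A f := by
      by_contra h; simp [h] at hf0
    obtain ⟨hfe, hfT⟩ := Finset.mem_erase.1 hf
    refine ⟨f, hfT, hfe, huf, ?_, ?_⟩
    · intro hvf
      apply hfe
      have key : ∀ g ∈ T, u ∈ A g → v ∈ A g → ({u, v} : Finset (Fin n)) = A g := by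
        intro g hg h1 h2
        apply Finset.eq_of_subset_of_card_le
        · intro z hz
          simp only [Finset.mem_insert, Finset.mem_singleton] at hz
          rcases hz with rfl | rfl <;> assumption
        · rw [hcard g hg, Finset.card_pair huv]
      exact hinj f hfT e he ((key f hfT huf hvf).symm.trans (key e he hu hv))
    · have := Finset.single_le_sum (f := fun e => if u ∈ A e then x e else 0)
        (fun g hg => by
          split_ifs; exacts [hx g (Finset.mem_of_mem_erase hg), le_rfl]) hf
      simp only [huf, if_true] at this
      linarith
  have hfrac : ∃ e ∈ T, 0 < x e ∧ x e < 1 := by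
    by_contra! hcon
    have hx01 : ∀ e ∈ T, x e = if x e = 1 then (1 : ℝ) else 0 := by
      intro e he
      split_ifs with h
      · exact h
      · rcases (hx e he).lt_or_eq with h0 | h0
        · exact absurd (le_antisymm (hle e he) (hcon e he h0)) h
        · exact h0.symm
    rw [Finset.sum_congr rfl hx01, Finset.sum_boole] at htot
    have h2 : 2 * (T.filter (fun e => x e = 1)).card = n := by exact_mod_cast htot
    obtain ⟨k, hk⟩ := hodd
    omega
  obtain ⟨e, he, h0, h1⟩ := hfrac
  obtain ⟨u, v, huv, hA⟩ := Finset.card_eq_two.1 (hcard e he)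
  have hu : u ∈ A e := by simp [hA]
  have hv : v ∈ A e := by simp [hA]
  obtain ⟨f, hf, hfe, huf, hvf, hxf⟩ := hother e he h0 h1 u v huv hu hv
  obtain ⟨g, hg, hge, hvg, hug, hxg⟩ := hother e he h0 h1 v u huv.symm hv hu
  have hfg : f ≠ g := by rintro rfl; exact hvf hvg
  have hsub : ({e, f, g} : Finset ι) ⊆ T := by
    intro z hz
    simp only [Finset.mem_insert, Finset.mem_singleton] at hz
    rcases hz with rfl | rfl | rfl <;> assumption
  have h3 := Finset.sum_le_sum_of_subset_of_nonneg (f := fun e => 1 - x e) hsub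
    (fun z hz _ => by have := hle z hz; linarith)
  rw [Finset.sum_insert (by simp [hfe.symm, hge.symm]), Finset.sum_pair hfg,
    Finset.sum_sub_distrib] at h3
  simp only [Finset.sum_const, nsmul_eq_mul, mul_one] at h3
  have h4 : (n : ℝ) + 2 < 2 * T.card := by linarith
  have h5 : n + 2 < 2 * T.card := by exact_mod_cast h4
  omega

theorem orbit_lower (n : ℕ) (hn : 3 ≤ n) (hodd : Odd n) (T : Finset (Fin n → ℝ))
    (hT : ↑T ⊆ fundWeightOrbit n 2) (h0 : (0 : Fin n → ℝ) ∈ convexHull ℝ (T : Set (Fin n → ℝ))) :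
    n + 3 ≤ 2 * T.card := by
  classical
  have hn0 : (n : ℝ) ≠ 0 := by positivity
  rw [Finset.mem_convexHull'] at h0
  obtain ⟨w, hw0, hw1, hw⟩ := h0
  have hch : ∀ v : Fin n → ℝ, ∃ A : Finset (Fin n), v ∈ T → A.card = 2 ∧
      v = fun i => (if i ∈ A then (1 : ℝ) else 0) - ((2 : ℕ) : ℝ) / (n : ℝ) := by
    intro v
    by_cases hv : v ∈ T
    · obtain ⟨A, h⟩ := hT hv
      exact ⟨A, fun _ => h⟩
    · exact ⟨∅, fun h => absurd h hv⟩
  choose A hA using hch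
  refine edges_lower n hodd T A ?_ (fun e he => (hA e he).1) (fun e => w e * n / 2) ?_ ?_
  · intro e he f hf h
    rw [(hA e he).2, (hA f hf).2, h]
  · intro e he
    have := hw0 e he
    positivity
  · intro i
    have h1 := congrFun hw i
    simp only [Finset.sum_apply, Pi.smul_apply, smul_eq_mul, Pi.zero_apply] at h1
    have h2 : ∀ e ∈ T, (if i ∈ A e then w e * n / 2 else 0) = (w e * e i) * (n / 2) + w e := by
      intro e he
      have h3 := congrFun (hA e he).2 i

      rw [h3]
      split_ifs <;> push_cast <;> field_simp <;> ring
    rw [Finset.sum_congr rfl h2, Finset.sum_add_distrib, ← Finset.sum_mul, h1, hw1]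
    ring

/-- The edges of a triangle plus a matching. -/
def triEdge (m k : ℕ) : Finset ℕ :=
  if k < m then {2 * k + 1, 2 * k + 2} else if k = m then {0, 1} else {0, 2}

theorem triEdge_card (m k : ℕ) : (triEdge m k).card = 2 := by
  unfold triEdge
  split_ifs <;> rw [Finset.card_pair] <;> omega

theorem triEdge_lt (m k i : ℕ) (hm : 1 ≤ m) (hi : i ∈ triEdge m k) : i < 2 * m + 1 := by
  unfold triEdge at hi
  split_ifs at hi <;> simp at hi <;> omega

/-- The weights. -/
noncomputable def triW (m k : ℕ) : ℝ :=
  (if k < m then 2 - (if k = 0 then 1 else 0) else 1) / (2 * m + 1)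

theorem triW_sum (m : ℕ) (hm : 1 ≤ m) : ∑ k ∈ Finset.range (m + 2), triW m k = 1 := by
  unfold triW
  rw [← Finset.sum_div, Finset.sum_range_succ, Finset.sum_range_succ]
  rw [Finset.sum_congr rfl (g := fun k => (2 : ℝ) - if k = 0 then 1 else 0)
    (fun k hk => by rw [if_pos (Finset.mem_range.1 hk)])]
  rw [Finset.sum_sub_distrib, Finset.sum_ite_eq']
  have : 0 < m := hm
  simp [this]
  field_simp

theorem triW_vertex (m i : ℕ) (hm : 1 ≤ m) (hi : i < 2 * m + 1) :
    ∑ k ∈ Finset.range (m + 2), triW m k * (if i ∈ triEdge m k then 1 else 0) = 2 / (2 * m + 1) := by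
  have hpos : (2 * (m : ℝ) + 1) ≠ 0 := by positivity
  rw [Finset.sum_range_succ, Finset.sum_range_succ]
  by_cases h0 : i = 0
  · subst h0
    rw [Finset.sum_eq_zero]
    · simp [triW, triEdge]
      field_simp
      norm_num
    · intro k hk
      have := Finset.mem_range.1 hk
      simp [triEdge, this]
  · rw [Finset.sum_eq_single ((i - 1) / 2)]
    · have h1 : (i - 1) / 2 < m := by omega
      have h2 : i = 2 * ((i - 1) / 2) + 1 ∨ i = 2 * ((i - 1) / 2) + 2 := by omega
      have h3 : i ∈ triEdge m ((i - 1) / 2) := by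
        simp only [triEdge, if_pos h1, Finset.mem_insert, Finset.mem_singleton]
        exact h2
      rw [if_pos h3]
      by_cases hi1 : i = 1
      · subst hi1
        have : 0 < m := hm
        simp [triW, triEdge, this]
        field_simp
        norm_num
      by_cases hi2 : i = 2
      · subst hi2
        have : 0 < m := hm
        simp [triW, triEdge, this]
        field_simp
        norm_num
      have h4 : (i - 1) / 2 ≠ 0 := by omega
      simp only [triW, if_pos h1, if_neg h4]
      simp [triEdge, h0, hi1, hi2]
    · intro k hk hne
      have hk' := Finset.mem_range.1 hk
      have : i ∉ triEdge m k := by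
        simp only [triEdge, if_pos hk', Finset.mem_insert, Finset.mem_singleton]
        omega
      simp [this]
    · intro h
      exact absurd (Finset.mem_range.2 (by omega)) h

theorem orbit_upper (m : ℕ) (hm : 1 ≤ m) : ∃ T : Finset (Fin (2 * m + 1) → ℝ),
    ↑T ⊆ fundWeightOrbit (2 * m + 1) 2 ∧ T.card ≤ m + 2 ∧
    (0 : Fin (2 * m + 1) → ℝ) ∈ convexHull ℝ (T : Set (Fin (2 * m + 1) → ℝ)) := by
  classical
  let z : ℕ → Fin (2 * m + 1) → ℝ := fun k i =>
    (if (i : ℕ) ∈ triEdge m k then (1 : ℝ) else 0) - ((2 : ℕ) : ℝ) / ((2 * m + 1 : ℕ) : ℝ)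
  refine ⟨(Finset.range (m + 2)).image z, ?_, ?_, ?_⟩
  · intro v hv
    simp only [Finset.coe_image, Set.mem_image] at hv
    obtain ⟨k, -, rfl⟩ := hv
    refine ⟨(triEdge m k).attachFin (fun i hi => triEdge_lt m k i hm hi), ?_, ?_⟩
    · rw [Finset.card_attachFin, triEdge_card]
    · funext i
      simp [z]
  · exact Finset.card_image_le.trans (by simp)
  · have h := (convex_convexHull ℝ (((Finset.range (m + 2)).image z : Finset _) :
      Set (Fin (2 * m + 1) → ℝ))).sum_mem (t := Finset.range (m + 2)) (w := triW m) (z := z)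
      (fun k _ => by
        unfold triW
        apply div_nonneg _ (by positivity)
        split_ifs <;> norm_num)
      (triW_sum m hm)
      (fun k hk => subset_convexHull ℝ _ (Finset.mem_coe.2 (Finset.mem_image_of_mem z hk)))
    convert h using 1
    funext i
    simp only [Finset.sum_apply, Pi.smul_apply, smul_eq_mul, Pi.zero_apply, z, mul_sub]
    rw [Finset.sum_sub_distrib, triW_vertex m i hm i.2, ← Finset.sum_mul, triW_sum m hm]
    push_cast
    ring

/-- For every odd integer `n ≥ 3`, `m(n,2) = (n+3)/2`. -/
theorem minCardZeroConv_two_odd (n : ℕ) (hn : 3 ≤ n) (hodd : Odd n) :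
    minCardZeroConv n 2 = (n + 3) / 2 := by
  have hlow := orbit_lower n hn hodd
  obtain ⟨m, rfl⟩ := hodd
  obtain ⟨T, hT, hc, h0⟩ := orbit_upper m (by omega)
  unfold minCardZeroConv
  apply le_antisymm
  · refine le_trans (Nat.sInf_le (m := T.card) ⟨T, hT, rfl, h0⟩) ?_
    omega
  · refine le_csInf ⟨_, T, hT, rfl, h0⟩ ?_
    rintro k ⟨S, hS, rfl, hS0⟩
    have := hlow S hS hS0
    omega
end

section
/- If n = j·k with integers j ≥ 1, k ≥ 2 and j ≤ n/2, then m(n,j) = k = n/j. -/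
/-- If `n = j·k` with `j ≥ 1`, `k ≥ 2` and `j ≤ n/2`, then `m(n,j) = k`. -/
theorem minCardZeroConv_of_dvd (n j k : ℕ) (hj : 1 ≤ j) (hk : 2 ≤ k)
    (hn : n = j * k) (hhalf : 2 * j ≤ n) :
    minCardZeroConv n j = k := by
  subst hn
  have hk0 : (0 : ℝ) < k := by exact_mod_cast (by omega : 0 < k)
  have hj0 : (0 : ℝ) < j := by exact_mod_cast (by omega : 0 < j)
  have hjk : (j : ℝ) / ((j * k : ℕ) : ℝ) = 1 / k := by
    push_cast
    field_simp
  -- lower bound: every coordinate is covered by some set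
  have lower : ∀ T : Finset (Fin (j * k) → ℝ), ↑T ⊆ fundWeightOrbit (j * k) j →
      (0 : Fin (j * k) → ℝ) ∈ convexHull ℝ (T : Set (Fin (j * k) → ℝ)) → k ≤ T.card := by
    intro T hT h0
    have hT' : ∀ v : Fin (j * k) → ℝ, ∃ A : Finset (Fin (j * k)), v ∈ T → A.card = j ∧
        v = fun i => (if i ∈ A then (1 : ℝ) else 0) - (j : ℝ) / ((j * k : ℕ) : ℝ) := by
      intro v
      by_cases hv : v ∈ T
      · obtain ⟨A, hA⟩ := hT hv
        exact ⟨A, fun _ => hA⟩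
      · exact ⟨∅, fun h => absurd h hv⟩
    choose A hA using hT'
    have hcover : (Finset.univ : Finset (Fin (j * k))) ⊆ T.biUnion A := by
      intro i _
      by_contra hi
      have hni : ∀ v ∈ T, i ∉ A v := by
        intro v hv hiA
        exact hi (Finset.mem_biUnion.2 ⟨v, hv, hiA⟩)
      have hsub : convexHull ℝ (T : Set (Fin (j * k) → ℝ)) ⊆ {v | v i ≤ -(1 / k : ℝ)} := by
        apply convexHull_min
        · intro v hv
          have h := congrFun (hA v hv).2 i
          rw [if_neg (hni v hv), hjk] at h
          simp only [Set.mem_ofPred_eq]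
          linarith
        · exact convex_halfSpace_le (LinearMap.isLinear (LinearMap.proj i)) _
      have h := hsub h0
      simp only [Set.mem_ofPred_eq, Pi.zero_apply] at h
      have : (0 : ℝ) < 1 / k := by positivity
      linarith
    have h1 := Finset.card_le_card hcover
    have h2 : (T.biUnion A).card ≤ T.card * j :=
      Finset.card_biUnion_le_card_mul _ _ _ (fun v hv => (hA v hv).1.le)
    rw [Finset.card_univ, Fintype.card_fin] at h1
    have h3 : j * k ≤ j * T.card := by
      rw [mul_comm j T.card]
      exact h1.trans h2
    exact Nat.le_of_mul_le_mul_left h3 (by omega)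
  -- upper bound: the residue classes partition the coordinates
  let e : Fin j × Fin k ≃ Fin (j * k) := finProdFinEquiv
  let w : Fin k → Fin (j * k) → ℝ := fun c i =>
    (if (e.symm i).2 = c then (1 : ℝ) else 0) - (j : ℝ) / ((j * k : ℕ) : ℝ)
  have hw : ∀ c, w c ∈ fundWeightOrbit (j * k) j := by
    intro c
    refine ⟨(Finset.univ ×ˢ {c}).map e.toEmbedding, by simp, ?_⟩
    funext i
    have : i ∈ (Finset.univ ×ˢ {c}).map e.toEmbedding ↔ (e.symm i).2 = c := by
      rw [Finset.mem_map_equiv, Finset.mem_product, Finset.mem_singleton]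
      exact ⟨fun h => h.2, fun h => ⟨Finset.mem_univ _, h⟩⟩
    simp only [w, this]
  classical
  let T : Finset (Fin (j * k) → ℝ) := Finset.univ.image w
  have hTs : (T : Set (Fin (j * k) → ℝ)) ⊆ fundWeightOrbit (j * k) j := by
    intro v hv
    obtain ⟨c, -, rfl⟩ := Finset.mem_image.1 (Finset.mem_coe.1 hv)
    exact hw c
  have h0 : (0 : Fin (j * k) → ℝ) ∈ convexHull ℝ (T : Set (Fin (j * k) → ℝ)) := by
    have hz : (0 : Fin (j * k) → ℝ) = ∑ c : Fin k, (1 / k : ℝ) • w c := by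
      funext i
      simp only [Finset.sum_apply, Pi.smul_apply, smul_eq_mul, Pi.zero_apply, w, hjk]
      rw [← Finset.mul_sum, Finset.sum_sub_distrib]
      simp [hk0.ne']
    rw [hz]
    apply (convex_convexHull ℝ _).sum_mem
    · intro c _
      positivity
    · simp [hk0.ne']
    · intro c _
      exact subset_convexHull ℝ _ (Finset.mem_coe.2 (Finset.mem_image_of_mem w (Finset.mem_univ c)))
  have hcard : T.card = k := by
    apply le_antisymm
    · exact Finset.card_image_le.trans (by simp)
    · exact lower T hTs h0
  unfold minCardZeroConv
  apply le_antisymm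
  · exact Nat.sInf_le ⟨T, hTs, hcard, h0⟩
  · refine le_csInf ⟨k, T, hTs, hcard, h0⟩ ?_
    rintro m ⟨S, hS, rfl, hS0⟩
    exact lower S hS hS0
end

section
/- For every integer n ≥ 4: if 3 divides n then m(n,3) = n/3, and if 3 does not divide n then m(n,3) = ⌊n/3⌋ + 3. -/
theorem light_bound {ι V : Type} [DecidableEq V] (L : Finset ι) (A : ι → Finset V) (w : ι → ℝ)
    (U : Finset V) (hA : ∀ a ∈ L, (A a).card = 3) (hU : ∀ a ∈ L, A a ⊆ U)
    (hw : ∀ a ∈ L, 0 < w a) (hw1 : ∀ a ∈ L, w a < 1)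
    (hd : ∀ i ∈ U, ∑ a ∈ L, (if i ∈ A a then w a else 0) = 1) (h3 : ¬ 3 ∣ U.card) :
    U.card / 3 + 3 ≤ L.card := by
  by_contra hlt
  -- double counting
  have hcount : ∑ i ∈ U, (L.filter (fun a => i ∈ A a)).card = 3 * L.card := by
    have := Finset.sum_card_bipartiteAbove_eq_sum_card_bipartiteBelow
      (s := U) (t := L) (fun i a => i ∈ A a)
    unfold Finset.bipartiteAbove Finset.bipartiteBelow at this
    rw [this]
    rw [Finset.sum_congr rfl (g := fun _ => 3)]
    · simp [mul_comm]
    · intro a ha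
      rw [← hA a ha]
      congr 1
      ext i
      simp only [Finset.mem_filter]
      exact ⟨fun h => h.2, fun h => ⟨hU a ha h, h⟩⟩
  have hdeg : ∀ i ∈ U, 2 ≤ (L.filter (fun a => i ∈ A a)).card := by
    intro i hi
    have h1 := hd i hi
    rw [← Finset.sum_filter] at h1
    by_contra hc
    have hc' : (L.filter (fun a => i ∈ A a)).card ≤ 1 := by omega
    rcases Nat.le_one_iff_eq_zero_or_eq_one.1 hc' with h0 | h0
    · rw [Finset.card_eq_zero] at h0
      rw [h0] at h1
      simp at h1
    · obtain ⟨a, ha⟩ := Finset.card_eq_one.1 h0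
      have hmem : a ∈ L.filter (fun a => i ∈ A a) := by rw [ha]; simp
      rw [ha, Finset.sum_singleton] at h1
      have := hw1 a (Finset.mem_filter.1 hmem).1
      linarith
  have h2 : 2 * U.card ≤ 3 * L.card := by
    rw [← hcount]
    have := Finset.card_nsmul_le_sum U _ 2 hdeg
    simpa [mul_comm] using this
  have hLne : L.Nonempty := by
    rw [← Finset.card_pos]; omega
  obtain ⟨a0, ha0⟩ := hLne
  have hU3 : 3 ≤ U.card := by
    rw [← hA a0 ha0]; exact Finset.card_le_card (hU a0 ha0)
  have hU4 : U.card = 4 := by omega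
  have hL3 : L.card ≤ 3 := by omega
  have hLpos : 0 < L.card := Finset.card_pos.2 ⟨a0, ha0⟩
  have hex : ∃ i ∈ U, ∀ a ∈ L, i ∈ A a := by
    by_contra hno
    push Not at hno
    have : ∀ i ∈ U, (L.filter (fun a => i ∈ A a)).card ≤ L.card - 1 := by
      intro i hi
      obtain ⟨a, ha, hia⟩ := hno i hi
      have : (L.filter (fun a => i ∈ A a)).card < L.card := by
        apply Finset.card_lt_card
        rw [Finset.filter_ssubset]
        exact ⟨a, ha, hia⟩
      omega
    have h4 := Finset.sum_le_card_nsmul U _ _ this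
    rw [hcount, hU4, smul_eq_mul] at h4
    omega
  obtain ⟨v, hv, hvall⟩ := hex
  have htot : ∑ a ∈ L, w a = 1 := by
    rw [← hd v hv]
    exact Finset.sum_congr rfl (fun a ha => by rw [if_pos (hvall a ha)])
  have htot2 : ∑ i ∈ U, ∑ a ∈ L, (if i ∈ A a then w a else 0) = 3 * ∑ a ∈ L, w a := by
    rw [Finset.sum_comm, Finset.mul_sum]
    refine Finset.sum_congr rfl (fun a ha => ?_)
    rw [← Finset.sum_filter, Finset.filter_mem_eq_inter, Finset.inter_eq_right.2 (hU a ha)]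
    simp [hA a ha]
  rw [Finset.sum_congr rfl hd, htot] at htot2
  simp only [Finset.sum_const, hU4, nsmul_eq_mul] at htot2
  norm_num at htot2

theorem total_weight {ι : Type} {n : ℕ} (s : Finset ι) (A : ι → Finset (Fin n)) (w : ι → ℝ)
    (hA : ∀ a ∈ s, (A a).card = 3)
    (hd : ∀ i, ∑ a ∈ s, (if i ∈ A a then w a else 0) = 1) :
    3 * ∑ a ∈ s, w a = n := by
  have htot2 : ∑ i, ∑ a ∈ s, (if i ∈ A a then w a else 0) = 3 * ∑ a ∈ s, w a := by
    rw [Finset.sum_comm, Finset.mul_sum]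
    refine Finset.sum_congr rfl (fun a ha => ?_)
    rw [← Finset.sum_filter, Finset.filter_mem_eq_inter, Finset.univ_inter]
    simp [hA a ha]
  rw [← htot2, Finset.sum_congr rfl (fun i _ => hd i)]
  simp

theorem lower_bound {ι : Type} {n : ℕ} (s : Finset ι) (A : ι → Finset (Fin n)) (w : ι → ℝ)
    (hA : ∀ a ∈ s, (A a).card = 3) (hw : ∀ a ∈ s, 0 < w a)
    (hd : ∀ i, ∑ a ∈ s, (if i ∈ A a then w a else 0) = 1) :
    n ≤ 3 * s.card ∧ (¬ 3 ∣ n → n / 3 + 3 ≤ s.card) := by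
  classical
  have hle : ∀ a ∈ s, w a ≤ 1 := by
    intro a ha
    have : (A a).Nonempty := by rw [← Finset.card_pos, hA a ha]; norm_num
    obtain ⟨i, hi⟩ := this
    rw [← hd i]
    have := Finset.single_le_sum (f := fun a => if i ∈ A a then w a else 0)
      (fun b hb => by split_ifs <;> [exact (hw b hb).le; exact le_rfl]) ha
    simpa [hi] using this
  constructor
  · have h := total_weight s A w hA hd
    have h' : ∑ a ∈ s, w a ≤ s.card := by
      simpa using Finset.sum_le_card_nsmul s w 1 hle
    have : (n : ℝ) ≤ 3 * s.card := by linarith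
    exact_mod_cast this
  intro h3
  set H := s.filter (fun a => w a = 1) with hH
  set L := s.filter (fun a => ¬ w a = 1) with hL
  have hcard : H.card + L.card = s.card := Finset.card_filter_add_card_filter_not _
  have hiso : ∀ a ∈ H, ∀ b ∈ s, ∀ i, i ∈ A a → i ∈ A b → b = a := by
    intro a ha b hb i hia hib
    by_contra hne
    have ha' := Finset.mem_filter.1 ha
    have hsub : ({a, b} : Finset ι) ⊆ s := by
      intro x hx
      simp only [Finset.mem_insert, Finset.mem_singleton] at hx
      rcases hx with rfl | rfl
      · exact ha'.1
      · exact hb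
    have := Finset.sum_le_sum_of_subset_of_nonneg (f := fun a => if i ∈ A a then w a else 0) hsub
      (fun b hb _ => by split_ifs <;> [exact (hw b hb).le; exact le_rfl])
    rw [hd i, Finset.sum_pair (Ne.symm hne)] at this
    simp only [hia, hib, if_true, ha'.2] at this
    linarith [hw b hb]
  set U : Finset (Fin n) := (H.biUnion A)ᶜ with hUdef
  have hbi : (H.biUnion A).card = 3 * H.card := by
    rw [Finset.card_biUnion]
    · rw [Finset.sum_congr rfl (fun a ha => hA a (Finset.mem_filter.1 ha).1),
        Finset.sum_const, smul_eq_mul, mul_comm]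
    · intro a ha b hb hne
      change Disjoint (A a) (A b)
      rw [Finset.disjoint_left]
      intro i hia hib
      exact hne (hiso a ha b (Finset.mem_filter.1 hb).1 i hia hib).symm
  have hUc : U.card + 3 * H.card = n := by
    have := Finset.card_compl_add_card (H.biUnion A)
    rw [hbi] at this
    simpa using this
  have key := light_bound L A w U
    (fun a ha => hA a (Finset.mem_filter.1 ha).1)
    (by
      intro b hb i hi
      rw [hUdef, Finset.mem_compl, Finset.mem_biUnion]
      rintro ⟨a, ha, hia⟩
      have hb' := Finset.mem_filter.1 hb
      have := hiso a ha b hb'.1 i hia hi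
      subst this
      exact hb'.2 (Finset.mem_filter.1 ha).2)
    (fun a ha => hw a (Finset.mem_filter.1 ha).1)
    (fun a ha => lt_of_le_of_ne (hle a (Finset.mem_filter.1 ha).1) (Finset.mem_filter.1 ha).2)
    (by
      intro i hi
      rw [hUdef, Finset.mem_compl, Finset.mem_biUnion] at hi
      rw [← hd i, ← Finset.sum_filter_add_sum_filter_not s (fun a => w a = 1), ← hH, ← hL]
      rw [Finset.sum_eq_zero (s := H), zero_add]
      intro a ha
      rw [if_neg]
      exact fun h => hi ⟨a, ha, h⟩)
    (by omega)
  omega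

theorem lower_conv {n : ℕ} (hn : 4 ≤ n) (T : Finset (Fin n → ℝ)) (hT : ↑T ⊆ fundWeightOrbit n 3)
    (h0 : (0 : Fin n → ℝ) ∈ convexHull ℝ (T : Set (Fin n → ℝ))) :
    n ≤ 3 * T.card ∧ (¬ 3 ∣ n → n / 3 + 3 ≤ T.card) := by
  classical
  rw [Finset.mem_convexHull'] at h0
  obtain ⟨w, hw0, hw1, hsum⟩ := h0
  have hch : ∀ v : Fin n → ℝ, ∃ A : Finset (Fin n), v ∈ T → A.card = 3 ∧
      v = fun i => (if i ∈ A then (1 : ℝ) else 0) - ((3 : ℕ) : ℝ) / (n : ℝ) := by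
    intro v
    by_cases hv : v ∈ T
    · obtain ⟨A, hA⟩ := hT hv
      exact ⟨A, fun _ => hA⟩
    · exact ⟨∅, fun h => absurd h hv⟩
  choose A hA using hch
  have hnpos : (0 : ℝ) < n := by
    have : 0 < n := by omega
    exact_mod_cast this
  have hmain := lower_bound (T.filter (fun v => w v ≠ 0)) A (fun v => w v * (n / 3))
    (fun v hv => (hA v (Finset.mem_filter.1 hv).1).1)
    (fun v hv => by
      have hv' := Finset.mem_filter.1 hv
      have := lt_of_le_of_ne (hw0 v hv'.1) (Ne.symm hv'.2)
      positivity)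
    (by
      intro i
      rw [Finset.sum_filter]
      have hi := congrFun hsum i
      rw [Finset.sum_apply] at hi
      have e1 : ∀ v ∈ T, (w v • v) i = w v * (if i ∈ A v then (1 : ℝ) else 0) - w v * (3 / n) := by
        intro v hv
        have := congrFun (hA v hv).2 i
        rw [Pi.smul_apply, smul_eq_mul, this]
        push_cast
        ring
      rw [Finset.sum_congr rfl e1, Finset.sum_sub_distrib, ← Finset.sum_mul, hw1] at hi
      have e2 : ∑ v ∈ T, (if w v ≠ 0 then (if i ∈ A v then w v * ((n : ℝ) / 3) else 0) else 0)
          = (∑ v ∈ T, w v * (if i ∈ A v then (1 : ℝ) else 0)) * (n / 3) := by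
        rw [Finset.sum_mul]
        refine Finset.sum_congr rfl (fun v _ => ?_)
        by_cases hz : w v = 0 <;> by_cases hm : i ∈ A v <;> simp [hz, hm]
      rw [e2]
      have e3 : ∑ v ∈ T, w v * (if i ∈ A v then (1 : ℝ) else 0) = 3 / n := by
        simp only [Pi.zero_apply] at hi
        linarith
      rw [e3]
      field_simp)
  have hc := Finset.card_filter_le T (fun v => w v ≠ 0)
  exact ⟨by omega, fun h => (hmain.2 h).trans hc⟩

/-- A fractional perfect matching by at most `k` triples on `range n`. -/
def FracMatch (n k : ℕ) : Prop :=
  ∃ (F : Finset (Finset ℕ)) (w : Finset ℕ → ℝ),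
    (∀ A ∈ F, A.card = 3 ∧ A ⊆ Finset.range n ∧ 0 ≤ w A) ∧ F.card ≤ k ∧
    ∀ i < n, ∑ A ∈ F, (if i ∈ A then w A else 0) = 1

theorem fracMatch_step {n k : ℕ} (h : FracMatch n k) : FracMatch (n + 3) (k + 1) := by
  classical
  obtain ⟨F, w, hF, hk, hd⟩ := h
  set B : Finset ℕ := {n, n + 1, n + 2} with hB
  have hBF : B ∉ F := by
    intro hb
    have := (hF B hb).2.1 (show n ∈ B by simp [hB])
    simp at this
  have hne : ∀ A ∈ F, A ≠ B := fun A hA h => hBF (h ▸ hA)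
  refine ⟨insert B F, fun A => if A = B then 1 else w A, ?_, ?_, ?_⟩
  · intro A hA
    rw [Finset.mem_insert] at hA
    rcases hA with rfl | hA
    · refine ⟨?_, ?_, by simp⟩
      · rw [hB]; simp
      · intro x hx
        simp only [hB, Finset.mem_insert, Finset.mem_singleton] at hx
        rw [Finset.mem_range]; omega
    · obtain ⟨h1, h2, h3⟩ := hF A hA
      refine ⟨h1, fun x hx => ?_, by simpa only [if_neg (hne A hA)] using h3⟩
      have := Finset.mem_range.1 (h2 hx)
      rw [Finset.mem_range]; omega
  · rw [Finset.card_insert_of_notMem hBF]; omega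
  · intro i hi
    rw [Finset.sum_insert hBF]
    have e : ∑ A ∈ F, (if i ∈ A then (if A = B then 1 else w A) else 0)
        = ∑ A ∈ F, (if i ∈ A then w A else 0) :=
      Finset.sum_congr rfl (fun A hA => by rw [if_neg (hne A hA)])
    rw [e]
    by_cases hin : i < n
    · rw [hd i hin, if_neg, zero_add]
      simp only [hB, Finset.mem_insert, Finset.mem_singleton]; omega
    · rw [Finset.sum_eq_zero, add_zero, if_pos]
      · simp only [if_true]
      · simp only [hB, Finset.mem_insert, Finset.mem_singleton]; omega
      · intro A hA
        rw [if_neg]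
        intro hiA
        exact hin (Finset.mem_range.1 ((hF A hA).2.1 hiA))

theorem fracMatch_zero : FracMatch 0 0 :=
  ⟨∅, fun _ => 0, by simp, by simp, by simp⟩

theorem fracMatch_four : FracMatch 4 4 := by
  refine ⟨{{0,1,2},{0,1,3},{0,2,3},{1,2,3}}, fun _ => 1/3, ?_, by decide, ?_⟩
  · intro A hA
    have h : A.card = 3 ∧ A ⊆ Finset.range 4 := by revert A; decide
    exact ⟨h.1, h.2, by norm_num⟩
  · intro i hi
    rw [← Finset.sum_filter, Finset.sum_const]
    have : ∀ i < 4, (Finset.filter (fun A => i ∈ A)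
      ({{0,1,2},{0,1,3},{0,2,3},{1,2,3}} : Finset (Finset ℕ))).card = 3 := by decide
    rw [this i hi]; norm_num

theorem fracMatch_five : FracMatch 5 4 := by
  refine ⟨{{0,1,2},{0,3,4},{1,3,4},{2,3,4}}, fun A => if 3 ∈ A then 1/3 else 2/3, ?_, by decide, ?_⟩
  · intro A hA
    have h : A.card = 3 ∧ A ⊆ Finset.range 5 := by revert A; decide
    exact ⟨h.1, h.2, by dsimp only; split_ifs <;> norm_num⟩
  · intro i hi
    rw [Finset.sum_insert (by decide), Finset.sum_insert (by decide),
      Finset.sum_insert (by decide), Finset.sum_singleton]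
    interval_cases i <;> norm_num

theorem fracMatch_iter {n k : ℕ} (h : FracMatch n k) (m : ℕ) : FracMatch (n + 3 * m) (k + m) := by
  induction m with
  | zero => exact h
  | succ m ih => exact fracMatch_step ih

theorem upper_conv {n k : ℕ} (hn : 4 ≤ n) (h : FracMatch n k) :
    ∃ T : Finset (Fin n → ℝ), ↑T ⊆ fundWeightOrbit n 3 ∧ T.card ≤ k ∧
    (0 : Fin n → ℝ) ∈ convexHull ℝ (T : Set (Fin n → ℝ)) := by
  classical
  obtain ⟨F, w, hF, hk, hd⟩ := h
  have hnpos : (0 : ℝ) < n := by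
    have : 0 < n := by omega
    exact_mod_cast this
  let A : Finset ℕ → Finset (Fin n) := fun B => Finset.univ.filter (fun i => i.val ∈ B)
  have hAc : ∀ B ∈ F, (A B).card = 3 := by
    intro B hB
    rw [← (hF B hB).1]
    refine Finset.card_bij (fun i _ => i.val) ?_ ?_ ?_
    · intro i hi; exact (Finset.mem_filter.1 hi).2
    · intro i _ j _ hij; exact Fin.ext hij
    · intro b hb
      exact ⟨⟨b, Finset.mem_range.1 ((hF B hB).2.1 hb)⟩, by simp [A, hb], rfl⟩
  have hd' : ∀ i : Fin n, ∑ B ∈ F, (if i ∈ A B then w B else 0) = 1 := by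
    intro i
    rw [← hd i.val i.isLt]
    refine Finset.sum_congr rfl (fun B _ => ?_)
    simp [A]
  have htot := total_weight F A w hAc hd'
  let v : Finset ℕ → (Fin n → ℝ) :=
    fun B i => (if i ∈ A B then (1 : ℝ) else 0) - ((3 : ℕ) : ℝ) / (n : ℝ)
  refine ⟨F.image v, ?_, Finset.card_image_le.trans hk, ?_⟩
  · intro x hx
    obtain ⟨B, hB, rfl⟩ := Finset.mem_image.1 (Finset.mem_coe.1 hx)
    exact ⟨A B, hAc B hB, rfl⟩
  · have hz : ∑ B ∈ F, (w B * (3 / n)) • v B = 0 := by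
      funext i
      rw [Finset.sum_apply]
      have e : ∀ B ∈ F, ((w B * (3 / n)) • v B) i
          = (if i ∈ A B then w B else 0) * (3 / n) - w B * (3 / n * (3 / n)) := by
        intro B _
        simp only [Pi.smul_apply, smul_eq_mul, v]
        split_ifs <;> push_cast <;> ring
      rw [Finset.sum_congr rfl e, Finset.sum_sub_distrib, ← Finset.sum_mul, ← Finset.sum_mul, hd' i]
      have : ∑ a ∈ F, w a = n / 3 := by linarith
      rw [this, Pi.zero_apply]
      field_simp
      ring
    rw [← hz]
    refine (convex_convexHull ℝ _).sum_mem ?_ ?_ ?_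
    · intro B hB
      have := (hF B hB).2.2
      positivity
    · rw [← Finset.sum_mul]
      have : ∑ a ∈ F, w a = n / 3 := by linarith
      rw [this]
      field_simp
    · intro B hB
      exact subset_convexHull ℝ _ (Finset.mem_coe.2 (Finset.mem_image_of_mem v hB))

theorem minCard_eq {n k : ℕ} (hn : 4 ≤ n) (h : FracMatch n k)
    (hl : ∀ c, (n ≤ 3 * c ∧ (¬ 3 ∣ n → n / 3 + 3 ≤ c)) → k ≤ c) : minCardZeroConv n 3 = k := by
  obtain ⟨T, hT, hTk, h0⟩ := upper_conv hn h
  unfold minCardZeroConv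
  apply le_antisymm
  · refine le_trans (Nat.sInf_le ?_) hTk
    exact ⟨T, hT, rfl, h0⟩
  · apply le_csInf
    · exact ⟨_, T, hT, rfl, h0⟩
    · rintro c ⟨S, hS, rfl, hS0⟩
      exact hl _ (lower_conv hn S hS hS0)

/-- For every `n ≥ 4`: if `3 ∣ n` then `m(n,3) = n/3`, and otherwise `m(n,3) = ⌊n/3⌋ + 3`. -/
theorem minCardZeroConv_three (n : ℕ) (hn : 4 ≤ n) :
    (3 ∣ n → minCardZeroConv n 3 = n / 3) ∧
    (¬ 3 ∣ n → minCardZeroConv n 3 = n / 3 + 3) := by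
  constructor
  · intro h
    refine minCard_eq hn ?_ (fun c hc => by omega)
    have := fracMatch_iter fracMatch_zero (n / 3)
    have e1 : 0 + 3 * (n / 3) = n := by omega
    have e2 : 0 + n / 3 = n / 3 := by omega
    rwa [e1, e2] at this
  · intro h
    refine minCard_eq hn ?_ (fun c hc => hc.2 h)
    rcases (by omega : n % 3 = 1 ∨ n % 3 = 2) with hr | hr
    · have := fracMatch_iter fracMatch_four (n / 3 - 1)
      have e1 : 4 + 3 * (n / 3 - 1) = n := by omega
      have e2 : 4 + (n / 3 - 1) = n / 3 + 3 := by omega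
      rwa [e1, e2] at this
    · have := fracMatch_iter fracMatch_five (n / 3 - 1)
      have e1 : 5 + 3 * (n / 3 - 1) = n := by omega
      have e2 : 4 + (n / 3 - 1) = n / 3 + 3 := by omega
      rwa [e1, e2] at this
end

section
/- Let n ≥ 2, let λ ∈ ℝ^n satisfy λ_1 ≥ … ≥ λ_n and λ_1+…+λ_n = 0, and let r ≥ 1 be an integer. Then 0 ∈ C_r(O_λ) if and only if the zero matrix can be written as a sum A_1 + … + A_r with all A_i ∈ O_λ. -/
/-- The `r`-th partial convex hull of a set `X`: the union of the convex hulls of all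
`r`-tuples of points of `X`. -/
def partialConvexHull {E : Type*} [AddCommGroup E] [Module ℝ E]
    (r : ℕ) (X : Set E) : Set E :=
  {y | ∃ f : Fin r → E, (∀ i, f i ∈ X) ∧ y ∈ convexHull ℝ (Set.range f)}

/-- The coadjoint orbit `O_λ` of `SU(n)`: the set of `n × n` complex Hermitian matrices
of trace zero whose eigenvalues, listed with multiplicity, are the entries of `lam`. -/
def coadjointOrbit {n : ℕ} (lam : Fin n → ℝ) : Set (Matrix (Fin n) (Fin n) ℂ) :=
  {A | A.trace = 0 ∧ ∃ hA : A.IsHermitian, ∃ σ : Equiv.Perm (Fin n),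
      ∀ i, hA.eigenvalues (σ i) = lam i}


section
open Cardinal in
theorem generic_aut {ι : Type} [Finite ι] (S : Set ℂ) (hS : S.Countable) :
    ∃ x : ι → ℂ, ∀ b : ι → ℂ, (∀ k, b k ∈ S) → ∀ m : ℕ, m ≠ 0 →
      ∃ τ : ℂ ≃+* ℂ, ∀ k, τ (x k) = b k + x k / m := by
  classical
  let K := Algebra.adjoin ℚ S
  have hK : Cardinal.mk K ≤ ℵ₀ := by
    have : Countable S := hS.to_subtype
    have := Algebra.cardinalMk_adjoin_le (R := ℚ) (A := ℂ) S
    simpa using this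
  obtain ⟨s, hs⟩ := exists_isTranscendenceBasis K ℂ
  have hcard := IsAlgClosed.cardinal_eq_cardinal_transcendence_basis_of_aleph0_lt _ hs hK
    (by rw [Cardinal.mk_complex]; exact aleph0_lt_continuum)
  have hinf : Infinite s := by
    rw [Cardinal.infinite_iff]
    simp only [Cardinal.lift_id] at hcard
    rw [← hcard, Cardinal.mk_complex]
    exact aleph0_le_continuum
  cases nonempty_fintype ι
  let f : ι ↪ s := (Fintype.equivFin ι).toEmbedding.trans
    ((Fin.valEmbedding).trans (Infinite.natEmbedding s))
  refine ⟨fun k => (f k : ℂ), fun b hb m hm => ?_⟩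
  let bK : s → K := fun u => if h : ∃ k, f k = u then ⟨b h.choose, Algebra.subset_adjoin (hb _)⟩ else 0
  have hbK : ∀ k, bK (f k) = ⟨b k, Algebra.subset_adjoin (hb _)⟩ := by
    intro k
    have h : ∃ k', f k' = f k := ⟨k, rfl⟩
    have h2 : h.choose = k := f.injective h.choose_spec
    simp only [bK, dif_pos h]
    congr 2
  let mi : K := algebraMap ℚ K (1 / m)
  let mm : K := algebraMap ℚ K m
  have hmi : mi * mm = 1 := by
    simp only [mi, mm, ← map_mul]
    rw [one_div_mul_cancel (by exact_mod_cast hm), map_one]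
  let ρ : MvPolynomial s K ≃ₐ[K] MvPolynomial s K := AlgEquiv.ofAlgHom
    (MvPolynomial.aeval fun u => MvPolynomial.C (bK u) + MvPolynomial.C mi * MvPolynomial.X u)
    (MvPolynomial.aeval fun u => MvPolynomial.C mm * (MvPolynomial.X u - MvPolynomial.C (bK u)))
    (by
      ext1 u
      simp only [AlgHom.comp_apply, MvPolynomial.aeval_X, map_mul, map_sub, MvPolynomial.algHom_C,
        MvPolynomial.algebraMap_eq, AlgHom.id_apply]
      have : (MvPolynomial.C mi * MvPolynomial.C mm : MvPolynomial s K) = 1 := by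
        rw [← map_mul, hmi, map_one]
      linear_combination (MvPolynomial.X u) * this)
    (by
      ext1 u
      simp only [AlgHom.comp_apply, MvPolynomial.aeval_X, map_mul, map_add, MvPolynomial.algHom_C,
        MvPolynomial.algebraMap_eq, AlgHom.id_apply]
      have : (MvPolynomial.C mi * MvPolynomial.C mm : MvPolynomial s K) = 1 := by
        rw [← map_mul, hmi, map_one]
      linear_combination (MvPolynomial.X u - MvPolynomial.C (bK u)) * this)
  let _ := IsAlgClosed.isAlgClosure_of_transcendence_basis _ hs
  let e : Algebra.adjoin K (Set.range ((↑) : s → ℂ)) ≃+* Algebra.adjoin K (Set.range ((↑) : s → ℂ)) :=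
    (hs.1.aevalEquiv.symm.trans (ρ.trans hs.1.aevalEquiv)).toRingEquiv
  refine ⟨IsAlgClosure.equivOfEquiv ℂ ℂ e, fun k => ?_⟩
  have h1 : ((f k : s) : ℂ) = algebraMap (Algebra.adjoin K (Set.range ((↑) : s → ℂ))) ℂ
      (hs.1.aevalEquiv (MvPolynomial.X (f k))) := by
    rw [hs.1.algebraMap_aevalEquiv]; simp
  beta_reduce
  conv_lhs => rw [h1]
  rw [IsAlgClosure.equivOfEquiv_algebraMap]
  have h2 : e (hs.1.aevalEquiv (MvPolynomial.X (f k))) =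
      hs.1.aevalEquiv (MvPolynomial.C (bK (f k)) + MvPolynomial.C mi * MvPolynomial.X (f k)) := by
    simp [e, ρ]
  rw [h2, hs.1.algebraMap_aevalEquiv, hbK]
  simp only [map_add, map_mul, MvPolynomial.aeval_C, MvPolynomial.aeval_X]
  have h3 : algebraMap K ℂ mi = 1 / m := by
    simp only [mi]
    rw [← IsScalarTower.algebraMap_apply ℚ K ℂ]; simp
  rw [h3]
  change b k + _ = _
  ring

open Matrix
open scoped ComplexOrder
theorem abel_antitone {n : ℕ} (t : Fin n → ℝ) (ht : Antitone t) :
    ∃ (c : Fin n → ℝ) (κ : ℝ), (∀ j, 0 ≤ c j) ∧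
      ∀ k, t k = (∑ j, c j * (if k ≤ j then 1 else 0)) - κ := by
  induction n with
  | zero => exact ⟨fun _ => 0, 0, fun j => j.elim0, fun k => k.elim0⟩
  | succ n ih =>
    rcases n with _ | n
    · exact ⟨fun _ => 0, -t 0, fun _ => le_rfl, fun k => by
        have hk : k = 0 := by omega
        simp [hk]⟩
    obtain ⟨c, κ, hc, h⟩ := ih (fun k => t k.succ) (fun a b hab => ht (Fin.succ_le_succ_iff.mpr hab))
    refine ⟨Fin.cons (t 0 - t (Fin.succ 0)) c, κ, ?_, ?_⟩
    · intro j
      refine Fin.cases ?_ ?_ j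
      · simp only [Fin.cons_zero]
        exact sub_nonneg.mpr (ht (Fin.zero_le _))
      · intro j; simpa using hc j
    · intro k
      refine Fin.cases ?_ ?_ k
      · have := h 0
        simp only [Fin.zero_le, if_true, mul_one] at this
        rw [Fin.sum_univ_succ]
        simp
        simp at this
        linarith
      · intro k
        rw [Fin.sum_univ_succ]
        simp [h k]

theorem abel_antitone' {n : ℕ} (t : Fin n → ℝ) (ht : Antitone t) :
    ∃ (c : Fin n → ℝ) (κ : ℝ), (∀ j, 0 ≤ c j) ∧
      ∀ l, t l = κ - (∑ k, c k * (if k ≤ l then 1 else 0)) := by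
  obtain ⟨c, κ, hc, h⟩ := abel_antitone (fun l => - t (Fin.rev l)) (fun a b hab => by
    simp only [neg_le_neg_iff]; exact ht (Fin.rev_le_rev.mpr hab))
  refine ⟨fun k => c (Fin.rev k), κ, fun j => hc _, fun l => ?_⟩
  have := h (Fin.rev l)
  simp only [Fin.rev_rev] at this
  have h2 : ∑ k, c (Fin.rev k) * (if k ≤ l then (1:ℝ) else 0) =
      ∑ j, c j * (if Fin.rev l ≤ j then 1 else 0) := by
    refine Fintype.sum_equiv Fin.revPerm _ _ (fun k => ?_)
    simp [Fin.rev_le_rev]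
  rw [h2]; linarith

theorem exists_perm_of_map_eq {n : ℕ} (a b : Fin n → ℝ)
    (h : Multiset.map a Finset.univ.val = Multiset.map b Finset.univ.val) :
    ∃ σ : Equiv.Perm (Fin n), ∀ i, b (σ i) = a i := by
  have key : ∀ c : ℝ, Nonempty ({i // a i = c} ≃ {i // b i = c}) := by
    intro c
    rw [← Fintype.card_eq, Fintype.card_subtype, Fintype.card_subtype]
    have := congrArg (Multiset.count c) h
    rw [Multiset.count_map, Multiset.count_map] at this
    simp only [eq_comm (a := c)] at this
    exact this
  exact ⟨Equiv.ofFiberEquiv (fun c => (key c).some), fun i => Equiv.ofFiberEquiv_map _ i⟩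

theorem mem_orbit_of_unitary {n : ℕ} (lam : Fin n → ℝ) (hsum : ∑ i, lam i = 0)
    (U : Matrix (Fin n) (Fin n) ℂ) (hU : Uᴴ * U = 1) :
    U * diagonal (fun k => (lam k : ℂ)) * Uᴴ ∈ coadjointOrbit lam := by
  refine ⟨?_, ?_⟩
  · rw [trace_mul_comm, ← mul_assoc, hU, one_mul, trace_diagonal]
    exact_mod_cast hsum
  · have hA : (U * diagonal (fun k => (lam k : ℂ)) * Uᴴ).IsHermitian := by
      unfold Matrix.IsHermitian
      simp only [conjTranspose_mul, conjTranspose_conjTranspose, diagonal_conjTranspose, mul_assoc]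
      congr 3
      ext k; simp
    refine ⟨hA, ?_⟩
    have h1 := hA.roots_charpoly_eq_eigenvalues
    have h2 : (U * diagonal (fun k => (lam k : ℂ)) * Uᴴ).charpoly =
        (diagonal (fun k => (lam k : ℂ))).charpoly := by
      rw [charpoly_mul_comm, ← mul_assoc, hU, one_mul]
    rw [h2, charpoly_diagonal, Finset.prod_eq_multiset_prod] at h1
    have h3 := Multiset.map_map (fun a : ℂ => Polynomial.X - Polynomial.C a)
      (fun k => (lam k : ℂ)) Finset.univ.val
    simp only [Function.comp_def] at h3
    rw [← h3, Polynomial.roots_multiset_prod_X_sub_C] at h1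
    exact exists_perm_of_map_eq _ _ (by
      have := congrArg (Multiset.map Complex.re) h1
      rw [Multiset.map_map, Multiset.map_map] at this
      simpa using this) 

theorem unitary_of_mem_orbit {n : ℕ} (lam : Fin n → ℝ)
    (A : Matrix (Fin n) (Fin n) ℂ) (hA : A ∈ coadjointOrbit lam) :
    ∃ U : Matrix (Fin n) (Fin n) ℂ, Uᴴ * U = 1 ∧
      A = U * diagonal (fun k => (lam k : ℂ)) * Uᴴ := by
  obtain ⟨-, hH, σ, hσ⟩ := hA
  have h := hH.spectral_theorem
  have hU : (hH.eigenvectorUnitary : Matrix (Fin n) (Fin n) ℂ)ᴴ * (hH.eigenvectorUnitary : Matrix (Fin n) (Fin n) ℂ) = 1 :=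
    Unitary.coe_star_mul_self _
  rw [Unitary.conjStarAlgAut_apply] at h
  set W := (hH.eigenvectorUnitary : Matrix (Fin n) (Fin n) ℂ)
  refine ⟨W.submatrix id σ, ?_, ?_⟩
  · rw [conjTranspose_submatrix, ← submatrix_mul _ _ _ _ _ Function.bijective_id, hU]
    exact submatrix_one_equiv σ
  · conv_lhs => rw [h]
    have : diagonal (fun k => (lam k : ℂ)) =
      (diagonal (RCLike.ofReal ∘ hH.eigenvalues) : Matrix (Fin n) (Fin n) ℂ).submatrix σ σ := by
      rw [submatrix_diagonal_equiv]
      congr 1; ext k; simp [← hσ k]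
    rw [this, conjTranspose_submatrix, submatrix_mul_equiv, submatrix_mul_equiv]
    simp [star_eq_conjTranspose]

theorem hull_range_iff {r : ℕ} {E : Type*} [AddCommGroup E] [Module ℝ E] (f : Fin r → E) (y : E) :
    y ∈ convexHull ℝ (Set.range f) ↔ ∃ p : Fin r → ℝ, (∀ i, 0 ≤ p i) ∧ ∑ i, p i = 1 ∧
      ∑ i, p i • f i = y := by
  constructor
  · intro hy
    have hsub : convexHull ℝ (Set.range f) ⊆
        (Fintype.linearCombination ℝ f) '' (stdSimplex ℝ (Fin r)) := by
      refine convexHull_min ?_ ((convex_stdSimplex ℝ _).linear_image _)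
      rintro _ ⟨i, rfl⟩
      exact ⟨Pi.single i 1, single_mem_stdSimplex ℝ i, by simp⟩
    obtain ⟨p, hp, h⟩ := hsub hy
    exact ⟨p, hp.1, hp.2, by simpa [Fintype.linearCombination_apply] using h⟩
  · rintro ⟨p, hp, h1, rfl⟩
    exact (convex_convexHull ℝ _).sum_mem (fun i _ => hp i) h1
      (fun i _ => subset_convexHull ℝ _ ⟨i, rfl⟩)

/-- Coordinate subspace of vectors supported on indices `≤ j`. -/
def stdSub {n : ℕ} (j : Fin n) : Submodule ℂ (Fin n → ℂ) where
  carrier := {v | ∀ k, j < k → v k = 0}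
  add_mem' := fun {a b} ha hb k hk => by simp [ha k hk, hb k hk]
  zero_mem' := fun k _ => rfl
  smul_mem' := fun c v hv k hk => by simp [hv k hk]

/-- The `j`-th step of the flag spanned by the columns of `g`. -/
noncomputable def flagSub {n : ℕ} (g : Matrix (Fin n) (Fin n) ℂ) (j : Fin n) :
    Submodule ℂ (Fin n → ℂ) := (stdSub j).map g.mulVecLin

/-- Diagonal projection on the coordinates `≤ j`. -/
def stdProj {n : ℕ} (j : Fin n) : Matrix (Fin n) (Fin n) ℂ :=
  diagonal (fun k => if k ≤ j then 1 else 0)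

theorem exists_proj {n : ℕ} (V : Submodule ℂ (Fin n → ℂ)) :
    ∃ P : Matrix (Fin n) (Fin n) ℂ, Pᴴ = P ∧ P * P = P ∧ (∀ v ∈ V, P *ᵥ v = v) ∧
      (∀ v, P *ᵥ v ∈ V) ∧ P.trace = (Module.finrank ℂ V : ℂ) := by
  classical
  let L := (WithLp.linearEquiv 2 ℂ (Fin n → ℂ))
  let V' : Submodule ℂ (EuclideanSpace ℂ (Fin n)) := V.map L.symm.toLinearMap
  have hfin : Module.finrank ℂ V' = Module.finrank ℂ V := LinearEquiv.finrank_map_eq L.symm V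
  let b := stdOrthonormalBasis ℂ V'
  let T : Matrix (Fin n) (Fin (Module.finrank ℂ V')) ℂ := fun a k => (b k : EuclideanSpace ℂ (Fin n)) a
  have hT : Tᴴ * T = 1 := by
    ext k l
    have := (orthonormal_iff_ite.mp b.orthonormal) k l
    rw [Matrix.mul_apply, Matrix.one_apply, ← this, Submodule.coe_inner,
      EuclideanSpace.inner_eq_star_dotProduct]
    unfold dotProduct
    refine Finset.sum_congr rfl fun a _ => ?_
    rw [mul_comm]; rfl
  have hmem : ∀ k, (fun a => T a k) ∈ V := by
    intro k
    obtain ⟨w, hw, hw2⟩ := (b k).2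
    have : (fun a => T a k) = w := by
      ext a; simp only [T, ← hw2]; rfl
    rw [this]; exact hw
  refine ⟨T * Tᴴ, ?_, ?_, ?_, ?_, ?_⟩
  · simp [conjTranspose_mul]
  · rw [Matrix.mul_assoc, ← Matrix.mul_assoc Tᴴ, hT, Matrix.one_mul]
  · intro v hv
    have hv' : L.symm v ∈ V' := ⟨v, hv, rfl⟩
    have h1 := b.sum_repr ⟨_, hv'⟩
    have : v = T *ᵥ (fun k => b.repr ⟨_, hv'⟩ k) := by
      have h2 := congrArg (fun z : V' => L (z : EuclideanSpace ℂ (Fin n))) h1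
      simp only [LinearEquiv.apply_symm_apply] at h2
      refine h2.symm.trans ?_
      ext a
      simp only [Submodule.coe_sum, map_sum, Finset.sum_apply, Submodule.coe_smul, map_smul,
        Pi.smul_apply, smul_eq_mul, mulVec, dotProduct]
      refine Finset.sum_congr rfl fun k _ => ?_
      rw [mul_comm]; rfl
    rw [this, mulVec_mulVec, Matrix.mul_assoc, hT, Matrix.mul_one]
  · intro v
    rw [← mulVec_mulVec]
    have : T *ᵥ (Tᴴ *ᵥ v) = ∑ k, (Tᴴ *ᵥ v) k • (fun a => T a k) := by
      ext a; simp [mulVec, dotProduct, mul_comm]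
    rw [this]
    exact V.sum_mem fun k _ => V.smul_mem _ (hmem k)
  · rw [trace_mul_comm, hT, trace_one, Fintype.card_fin, hfin]

theorem proj_entry_le {n : ℕ} (P : Matrix (Fin n) (Fin n) ℂ) (h1 : Pᴴ = P) (h2 : P * P = P)
    (a b : Fin n) : ‖P a b‖ ≤ 1 := by
  have hs : ∀ c, P c c = ((∑ d, ‖P c d‖ ^ 2 : ℝ) : ℂ) := by
    intro c
    conv_lhs => rw [← h2]
    rw [Matrix.mul_apply]
    push_cast
    refine Finset.sum_congr rfl fun d _ => ?_
    have : P d c = star (P c d) := by rw [← conjTranspose_apply, h1]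
    rw [this]
    exact Complex.mul_conj' _
  have hle : ‖P a b‖ ^ 2 ≤ ∑ d, ‖P a d‖ ^ 2 :=
    Finset.single_le_sum (f := fun d => ‖P a d‖ ^ 2) (fun d _ => sq_nonneg _) (Finset.mem_univ b)
  have hle2 : ‖P a a‖ ^ 2 ≤ ∑ d, ‖P a d‖ ^ 2 :=
    Finset.single_le_sum (f := fun d => ‖P a d‖ ^ 2) (fun d _ => sq_nonneg _) (Finset.mem_univ a)
  have h3 : ‖P a a‖ = ∑ d, ‖P a d‖ ^ 2 := by
    have : 0 ≤ ∑ d, ‖P a d‖ ^ 2 := Finset.sum_nonneg fun d _ => sq_nonneg _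
    rw [hs a, Complex.norm_real, Real.norm_of_nonneg this]
  have h4 : ‖P a a‖ ≤ 1 := by
    rw [← h3] at hle2
    nlinarith [norm_nonneg (P a a)]
  have : ‖P a b‖ ^ 2 ≤ 1 := by linarith
  exact (sq_le_one_iff₀ (norm_nonneg _)).mp this

theorem re_trace_mul_nonneg {n : ℕ} (R Q : Matrix (Fin n) (Fin n) ℂ) (hR : Rᴴ = R) (hR2 : R * R = R)
    (hQ : Qᴴ = Q) (hQ2 : Q * Q = Q) : 0 ≤ (R * Q).trace.re := by
  have : (R * Q).trace = ((Q * R)ᴴ * (Q * R)).trace := by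
    rw [conjTranspose_mul, hR, hQ]
    calc (R * Q).trace = (R * (R * Q)).trace := by rw [← mul_assoc, hR2]
      _ = (R * Q * R).trace := by rw [trace_mul_comm]
      _ = (R * (Q * Q) * R).trace := by rw [hQ2]
      _ = _ := by simp only [mul_assoc]
  rw [this]
  have := (posSemidef_conjTranspose_mul_self (Q * R)).trace_nonneg
  exact (Complex.le_def.mp this).1

/-- Error term. -/
noncomputable def flagErr {n : ℕ} (U g : Matrix (Fin n) (Fin n) ℂ) (j : Fin n) : ℝ :=
  ∑ a, ∑ b, ‖((1 - U * stdProj j * Uᴴ) * (g * stdProj j * g⁻¹)) a b‖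

theorem stdProj_conj {n : ℕ} (j : Fin n) : (stdProj j)ᴴ = stdProj j := by
  simp only [stdProj, diagonal_conjTranspose]
  congr 1; ext k; simp only [Pi.star_apply]; split_ifs <;> simp

theorem stdProj_sq {n : ℕ} (j : Fin n) : (stdProj j) * (stdProj j) = stdProj j := by
  simp only [stdProj, diagonal_mul_diagonal]
  congr 1; ext k; split_ifs <;> simp

theorem flag_trace_bound {n : ℕ} (U g : Matrix (Fin n) (Fin n) ℂ) (hU : Uᴴ * U = 1)
    (hg : IsUnit g.det) (j : Fin n) (V : Submodule ℂ (Fin n → ℂ))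
    (P : Matrix (Fin n) (Fin n) ℂ) (hP1 : Pᴴ = P) (hP2 : P * P = P) (hP3 : ∀ v ∈ V, P *ᵥ v = v) :
    (Module.finrank ℂ (V ⊓ flagSub g j : Submodule ℂ (Fin n → ℂ)) : ℝ) ≤
      (P * (U * stdProj j * Uᴴ)).trace.re + flagErr U g j := by
  obtain ⟨R, hR1, hR2, hR3, hR4, hR5⟩ := exists_proj (V ⊓ flagSub g j)
  set Q := U * stdProj j * Uᴴ with hQdef
  have hQ1 : Qᴴ = Q := by
    simp only [hQdef, conjTranspose_mul, conjTranspose_conjTranspose, stdProj_conj, mul_assoc]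
  have hQ2 : Q * Q = Q := by
    calc Q * Q = U * stdProj j * (Uᴴ * U) * stdProj j * Uᴴ := by simp only [hQdef, mul_assoc]
      _ = U * (stdProj j * stdProj j) * Uᴴ := by rw [hU, mul_one]; simp only [mul_assoc]
      _ = _ := by rw [stdProj_sq]
  have hPR : P * R = R := by
    refine ext_of_mulVec_single fun k => ?_
    rw [← mulVec_mulVec]
    exact hP3 _ (hR4 _).1
  have hRP : R * P = R := by
    have := congrArg conjTranspose hPR
    rwa [conjTranspose_mul, hP1, hR1] at this
  have h1 := re_trace_mul_nonneg (P - R) Q (by rw [conjTranspose_sub, hP1, hR1])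
    (by rw [mul_sub, sub_mul, sub_mul, hP2, hPR, hRP, hR2]; simp) hQ1 hQ2
  have hgR : (g * stdProj j * g⁻¹) * R = R := by
    refine ext_of_mulVec_single fun k => ?_
    rw [← mulVec_mulVec]
    obtain ⟨w, hw, hw2⟩ := (hR4 (Pi.single k 1)).2
    rw [← hw2, mulVecLin_apply, mulVec_mulVec, mul_assoc, nonsing_inv_mul _ hg, mul_one,
      ← mulVec_mulVec]
    congr 1
    ext l
    rw [stdProj, mulVec_diagonal]
    by_cases hl : l ≤ j
    · simp [hl]
    · simp [hl, hw l (not_le.mp hl)]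
  have h2 : (R * Q).trace = R.trace - (((1 - Q) * (g * stdProj j * g⁻¹)) * R).trace := by
    rw [mul_assoc (1 - Q), hgR, sub_mul, one_mul, trace_sub, trace_mul_comm Q R]; ring
  have h3 : ‖(((1 - Q) * (g * stdProj j * g⁻¹)) * R).trace‖ ≤ flagErr U g j := by
    rw [trace, flagErr]
    refine (norm_sum_le _ _).trans (Finset.sum_le_sum fun a _ => ?_)
    rw [diag_apply, Matrix.mul_apply]
    refine (norm_sum_le _ _).trans (Finset.sum_le_sum fun b _ => ?_)
    rw [norm_mul]
    exact mul_le_of_le_one_right (norm_nonneg _) (proj_entry_le R hR1 hR2 _ _)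
  have h4 := Complex.re_le_norm (((1 - Q) * (g * stdProj j * g⁻¹)) * R).trace
  rw [sub_mul, trace_sub, Complex.sub_re, h2, Complex.sub_re, hR5, Complex.natCast_re] at h1
  linarith

/-- Twist of a subspace by a field automorphism. -/
def twistSub {n : ℕ} (τ : ℂ ≃+* ℂ) (V : Submodule ℂ (Fin n → ℂ)) : Submodule ℂ (Fin n → ℂ) where
  carrier := {v | (fun k => τ.symm (v k)) ∈ V}
  add_mem' := fun {a b} ha hb => by
    have := V.add_mem ha hb
    change (fun k => τ.symm ((a + b) k)) ∈ V
    convert! this using 1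
    ext k; simp
  zero_mem' := by
    change (fun k => τ.symm ((0 : Fin n → ℂ) k)) ∈ V
    convert! V.zero_mem using 1
    ext k; simp
  smul_mem' := fun c v hv => by
    have := V.smul_mem (τ.symm c) hv
    change (fun k => τ.symm ((c • v) k)) ∈ V
    convert! this using 1
    ext k; simp

theorem finrank_twistSub {n : ℕ} (τ : ℂ ≃+* ℂ) (V : Submodule ℂ (Fin n → ℂ)) :
    Module.finrank ℂ (twistSub τ V) = Module.finrank ℂ V := by
  have : Module.rank ℂ V = Module.rank ℂ (twistSub τ V) := by
    refine rank_eq_of_equiv_equiv τ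
      { toFun := fun v => ⟨fun k => τ (v.1 k), by
          change (fun k => τ.symm (τ (v.1 k))) ∈ V
          simp⟩
        invFun := fun v => ⟨fun k => τ.symm (v.1 k), v.2⟩
        left_inv := fun v => by ext k; simp
        right_inv := fun v => by ext k; simp
        map_add' := fun v w => by ext k; simp } τ.bijective ?_
    intro r m
    ext k; simp
  rw [Module.finrank, Module.finrank, this]

theorem twistSub_flagSub {n : ℕ} (τ : ℂ ≃+* ℂ) (g : Matrix (Fin n) (Fin n) ℂ) (j : Fin n) :
    twistSub τ (flagSub g j) = flagSub (g.map τ) j := by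
  ext v
  constructor
  · rintro ⟨w, hw, hw2⟩
    refine ⟨fun k => τ (w k), fun k hk => by simp [hw k hk], ?_⟩
    ext a
    have := congrArg τ (congrFun hw2 a)
    simp only [RingEquiv.apply_symm_apply, mulVecLin_apply, mulVec, dotProduct, map_sum, map_mul] at this
    simpa [mulVec, dotProduct] using this
  · rintro ⟨w, hw, rfl⟩
    refine ⟨fun k => τ.symm (w k), fun k hk => by simp [hw k hk], ?_⟩
    ext a
    simp [mulVec, dotProduct]

theorem diag_decomp {n : ℕ} (lam c : Fin n → ℝ) (κ : ℝ)
    (h : ∀ k, lam k = (∑ j, c j * (if k ≤ j then 1 else 0)) - κ) :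
    diagonal (fun k => (lam k : ℂ)) =
      (∑ j, (c j : ℂ) • stdProj j) - (κ : ℂ) • (1 : Matrix (Fin n) (Fin n) ℂ) := by
  ext a b
  simp only [Matrix.sub_apply, Matrix.sum_apply, Matrix.smul_apply, stdProj, diagonal_apply,
    Matrix.one_apply, smul_eq_mul]
  by_cases hab : a = b
  · subst hab
    simp only [if_true, h a]
    push_cast
    simp
    refine Finset.sum_congr rfl fun x _ => ?_
    split_ifs <;> simp
  · simp [hab]

theorem conj_diag_decomp {n : ℕ} (lam c : Fin n → ℝ) (κ : ℝ)
    (h : ∀ k, lam k = (∑ j, c j * (if k ≤ j then 1 else 0)) - κ)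
    (U : Matrix (Fin n) (Fin n) ℂ) (hU : Uᴴ * U = 1) :
    U * diagonal (fun k => (lam k : ℂ)) * Uᴴ =
      (∑ j, (c j : ℂ) • (U * stdProj j * Uᴴ)) - (κ : ℂ) • (1 : Matrix (Fin n) (Fin n) ℂ) := by
  rw [diag_decomp lam c κ h, mul_sub, sub_mul, Finset.mul_sum, Finset.sum_mul]
  simp [mul_eq_one_comm.mp hU]

theorem weighted_bound {n r : ℕ} (lam c : Fin n → ℝ) (κ : ℝ) (hc : ∀ j, 0 ≤ c j)
    (h : ∀ k, lam k = (∑ j, c j * (if k ≤ j then 1 else 0)) - κ)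
    (p : Fin r → ℝ) (hp : ∀ i, 0 ≤ p i) (hp1 : ∑ i, p i = 1)
    (U g : Fin r → Matrix (Fin n) (Fin n) ℂ) (hU : ∀ i, (U i)ᴴ * U i = 1)
    (hg : ∀ i, IsUnit (g i).det)
    (hsum : ∑ i, (p i : ℂ) • (U i * diagonal (fun k => (lam k : ℂ)) * (U i)ᴴ) = 0)
    (V : Submodule ℂ (Fin n → ℂ)) :
    ∑ i, p i * ∑ j, c j * (Module.finrank ℂ (V ⊓ flagSub (g i) j : Submodule ℂ (Fin n → ℂ)) : ℝ) ≤
      κ * Module.finrank ℂ V + ∑ i, p i * ∑ j, c j * flagErr (U i) (g i) j := by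
  obtain ⟨P, hP1, hP2, hP3, hP4, hP5⟩ := exists_proj V
  have h0 : ∑ i, p i * (∑ j, c j * (P * (U i * stdProj j * (U i)ᴴ)).trace.re) =
      κ * Module.finrank ℂ V := by
    have h1 := congrArg (fun M => (P * M).trace.re) hsum
    simp only [conj_diag_decomp lam c κ h _ (hU _), Finset.mul_sum, trace_sum, trace_smul,
      Matrix.mul_smul, mul_sub, trace_sub, Complex.re_sum, smul_eq_mul, Complex.re_ofReal_mul,
      Complex.sub_re, mul_one, hP5, Complex.natCast_re, mul_zero, trace_zero, Complex.zero_re,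
      Finset.sum_sub_distrib] at h1
    rw [← Finset.sum_mul, hp1, one_mul, sub_eq_zero] at h1
    rw [← h1]
    simp only [Finset.mul_sum]
  rw [← h0, ← Finset.sum_add_distrib]
  refine Finset.sum_le_sum fun i _ => ?_
  rw [← mul_add, ← Finset.sum_add_distrib]
  refine mul_le_mul_of_nonneg_left (Finset.sum_le_sum fun j _ => ?_) (hp i)
  rw [← mul_add]
  exact mul_le_mul_of_nonneg_left (flag_trace_bound _ _ (hU i) (hg i) j V P hP1 hP2 hP3) (hc j)

theorem flagErr_tendsto {n : ℕ} (U x : Matrix (Fin n) (Fin n) ℂ) (hU : Uᴴ * U = 1) (j : Fin n) :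
    Filter.Tendsto (fun m : ℕ => flagErr U (U + ((m : ℂ)⁻¹) • x) j) Filter.atTop (nhds 0) := by
  have hdet : U.det ≠ 0 := (isUnit_det_of_left_inverse hU).ne_zero
  have hg : Filter.Tendsto (fun m : ℕ => U + ((m : ℂ)⁻¹) • x) Filter.atTop (nhds U) := by
    have h1 : Filter.Tendsto (fun m : ℕ => ((m : ℂ)⁻¹)) Filter.atTop (nhds 0) :=
      tendsto_inv_atTop_nhds_zero_nat
    simpa using tendsto_const_nhds.add (h1.smul_const x)
  have hinv : ContinuousAt (fun g : Matrix (Fin n) (Fin n) ℂ => g⁻¹) U := by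
    have : (fun g : Matrix (Fin n) (Fin n) ℂ => g⁻¹) = fun g => (g.det)⁻¹ • g.adjugate := by
      ext1 g; rw [Matrix.inv_def, Ring.inverse_eq_inv']
    rw [this]
    exact ((continuous_id.matrix_det).continuousAt.inv₀ hdet).smul
      (continuous_id.matrix_adjugate).continuousAt
  have hc : ContinuousAt (fun g => flagErr U g j) U := by
    unfold flagErr
    refine tendsto_finsetSum _ fun a _ => tendsto_finsetSum _ fun b _ => ?_
    have h2 : ContinuousAt (fun g : Matrix (Fin n) (Fin n) ℂ =>
        (1 - U * stdProj j * Uᴴ) * (g * stdProj j * g⁻¹)) U :=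
      continuousAt_const.mul ((continuousAt_id.mul continuousAt_const).mul hinv)
    exact ((continuous_apply_apply a b).continuousAt.comp h2).norm
  have h0 : flagErr U U j = 0 := by
    unfold flagErr
    have hUi : U⁻¹ = Uᴴ := inv_eq_left_inv hU
    have : (1 - U * stdProj j * Uᴴ) * (U * stdProj j * U⁻¹) = 0 := by
      rw [hUi, sub_mul, one_mul, sub_eq_zero]
      calc U * stdProj j * Uᴴ = U * (stdProj j * stdProj j) * Uᴴ := by rw [stdProj_sq]
        _ = U * stdProj j * (Uᴴ * U) * stdProj j * Uᴴ := by rw [hU, mul_one]; simp only [mul_assoc]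
        _ = _ := by simp only [mul_assoc]
    simp [this]
  have := hc.tendsto.comp hg
  rw [h0] at this
  exact this

theorem generic_semistable {n r : ℕ} (hr : 1 ≤ r) (lam c : Fin n → ℝ) (κ : ℝ) (hc : ∀ j, 0 ≤ c j)
    (h : ∀ k, lam k = (∑ j, c j * (if k ≤ j then 1 else 0)) - κ)
    (p : Fin r → ℝ) (hp : ∀ i, 0 ≤ p i) (hp1 : ∑ i, p i = 1)
    (U : Fin r → Matrix (Fin n) (Fin n) ℂ) (hU : ∀ i, (U i)ᴴ * U i = 1)
    (hsum : ∑ i, (p i : ℂ) • (U i * diagonal (fun k => (lam k : ℂ)) * (U i)ᴴ) = 0) :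
    ∃ x : Fin r → Matrix (Fin n) (Fin n) ℂ, (∀ i, IsUnit (x i).det) ∧
      ∀ V : Submodule ℂ (Fin n → ℂ),
        ∑ i, ∑ j, c j * (Module.finrank ℂ (V ⊓ flagSub (x i) j : Submodule ℂ (Fin n → ℂ)) : ℝ) ≤
          r * (κ * Module.finrank ℂ V) := by
  obtain ⟨y, hy⟩ := generic_aut (ι := Fin r × Fin n × Fin n)
    (Set.range fun q : Fin r × Fin n × Fin n => U q.1 q.2.1 q.2.2) (Set.countable_range _)
  let x : Fin r → Matrix (Fin n) (Fin n) ℂ := fun i a b => y (i, a, b)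
  have hτ : ∀ (s : Equiv.Perm (Fin r)) (m : ℕ), m ≠ 0 → ∃ τ : ℂ ≃+* ℂ, ∀ i,
      (x i).map τ = U (s i) + ((m : ℂ)⁻¹) • x i := by
    intro s m hm
    obtain ⟨τ, hτ⟩ := hy (fun q => U (s q.1) q.2.1 q.2.2) (fun q => ⟨(s q.1, q.2.1, q.2.2), rfl⟩) m hm
    refine ⟨τ, fun i => ?_⟩
    ext a b
    change τ (y (i, a, b)) = U (s i) a b + (m : ℂ)⁻¹ * y (i, a, b)
    rw [hτ, div_eq_inv_mul]
  have hunit : ∀ i, IsUnit (x i).det := by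
    intro i
    have hg : Filter.Tendsto (fun m : ℕ => (U i + ((m : ℂ)⁻¹) • x i).det) Filter.atTop
        (nhds (U i).det) := by
      have h1 : Filter.Tendsto (fun m : ℕ => ((m : ℂ)⁻¹)) Filter.atTop (nhds 0) :=
        tendsto_inv_atTop_nhds_zero_nat
      have h2 : Filter.Tendsto (fun m : ℕ => U i + ((m : ℂ)⁻¹) • x i) Filter.atTop (nhds (U i)) := by
        simpa using tendsto_const_nhds.add (h1.smul_const (x i))
      exact ((continuous_id.matrix_det).tendsto (U i)).comp h2
    have hdet : (U i).det ≠ 0 := (isUnit_det_of_left_inverse (hU i)).ne_zero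
    obtain ⟨m, hm1, hm2⟩ := ((hg.eventually_ne hdet).and (Filter.eventually_ge_atTop 1)).exists
    obtain ⟨τ, hτ⟩ := hτ 1 m (by omega)
    have h3 := hτ i
    simp only [Equiv.Perm.coe_one, id_eq] at h3
    rw [← h3] at hm1
    refine isUnit_iff_ne_zero.mpr fun h0 => hm1 ?_
    have : ((x i).map τ).det = τ (x i).det := (RingEquiv.map_det τ (x i)).symm
    rw [this, h0, map_zero]
  refine ⟨x, hunit, fun V => ?_⟩
  have hperm : ∀ s : Equiv.Perm (Fin r),
      ∑ i, p (s i) * ∑ j, c j * (Module.finrank ℂ (V ⊓ flagSub (x i) j : Submodule ℂ (Fin n → ℂ)) : ℝ) ≤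
      κ * Module.finrank ℂ V := by
    intro s
    have hlim : Filter.Tendsto (fun m : ℕ => κ * Module.finrank ℂ V +
        ∑ i, p (s i) * ∑ j, c j * flagErr (U (s i)) (U (s i) + ((m : ℂ)⁻¹) • x i) j) Filter.atTop
        (nhds (κ * Module.finrank ℂ V + ∑ i, p (s i) * ∑ j, c j * 0)) := by
      refine tendsto_const_nhds.add (tendsto_finsetSum _ fun i _ => tendsto_const_nhds.mul
        (tendsto_finsetSum _ fun j _ => tendsto_const_nhds.mul (flagErr_tendsto _ _ (hU _) j)))
    simp only [mul_zero, Finset.sum_const_zero, add_zero] at hlim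
    refine ge_of_tendsto hlim ?_
    filter_upwards [Filter.eventually_ge_atTop 1] with m hm
    obtain ⟨τ, hτ⟩ := hτ s m (by omega)
    have hw := weighted_bound lam c κ hc h (fun i => p (s i)) (fun i => hp _)
      (by rw [Equiv.sum_comp s p]; exact hp1) (fun i => U (s i)) (fun i => (x i).map τ)
      (fun i => hU _) (fun i => by
        have : ((x i).map τ).det = τ (x i).det := (RingEquiv.map_det τ (x i)).symm
        rw [this]; exact (hunit i).map τ)
      (by
        rw [Equiv.sum_comp s (fun i => (p i : ℂ) • (U i * diagonal (fun k => (lam k : ℂ)) * (U i)ᴴ))]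
        exact hsum) (twistSub τ V)
    have h5 : ∀ i j, Module.finrank ℂ (twistSub τ V ⊓ flagSub ((x i).map τ) j : Submodule ℂ (Fin n → ℂ))
        = Module.finrank ℂ (V ⊓ flagSub (x i) j : Submodule ℂ (Fin n → ℂ)) := by
      intro i j
      rw [← twistSub_flagSub, ← finrank_twistSub τ (V ⊓ flagSub (x i) j)]
      rfl
    simp only [h5, finrank_twistSub] at hw
    simp only [hτ] at hw
    exact hw
  have : NeZero r := ⟨by omega⟩
  have htot := Finset.sum_le_sum fun (k : Fin r) (_ : k ∈ Finset.univ) => hperm (Equiv.addRight k)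
  rw [Finset.sum_comm] at htot
  simp only [Finset.sum_const, Finset.card_univ, Fintype.card_fin, nsmul_eq_mul] at htot
  refine le_trans (le_of_eq ?_) htot
  refine Finset.sum_congr rfl fun i _ => ?_
  rw [← Finset.sum_mul]
  have : ∑ k, p ((Equiv.addRight k) i) = 1 := by
    rw [← hp1]
    exact Equiv.sum_comp (Equiv.addLeft i) p
  rw [this, one_mul]

theorem one_le_det_one_add {J : Type*} [Fintype J] [DecidableEq J] (A : Matrix J J ℂ)
    (hA : A.PosSemidef) : 1 ≤ (1 + A).det.re ∧ (1 + A).det.im = 0 := by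
  have h := hA.1.spectral_theorem
  rw [Unitary.conjStarAlgAut_apply] at h
  set U : Matrix J J ℂ := (hA.1.eigenvectorUnitary : Matrix J J ℂ) with hUdef
  have hU : Uᴴ * U = 1 := Unitary.coe_star_mul_self _
  have hU' : U * Uᴴ = 1 := mul_eq_one_comm.mp hU
  have h2 : 1 + A = U * diagonal (fun k => ((1 + hA.1.eigenvalues k : ℝ) : ℂ)) * Uᴴ := by
    have : diagonal (fun k => ((1 + hA.1.eigenvalues k : ℝ) : ℂ)) =
        1 + diagonal (RCLike.ofReal ∘ hA.1.eigenvalues) := by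
      rw [← diagonal_one, diagonal_add]; congr 1; ext k; simp
    rw [this, mul_add, add_mul, mul_one, hU']
    conv_lhs => rw [h]
    rfl
  have h3 : (1 + A).det = ((∏ k, (1 + hA.1.eigenvalues k) : ℝ) : ℂ) := by
    rw [h2, det_mul_comm, ← mul_assoc, hU, one_mul, det_diagonal]
    push_cast; rfl
  rw [h3, Complex.ofReal_re, Complex.ofReal_im]
  refine ⟨?_, rfl⟩
  have : ∏ k : J, (1:ℝ) ≤ ∏ k, (1 + hA.1.eigenvalues k) :=
    Finset.prod_le_prod (fun _ _ => zero_le_one) fun k _ => by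
      have := hA.eigenvalues_nonneg k; linarith
  simpa using this

theorem minor_le_gram {m J : Type*} [Fintype m] [DecidableEq m] [Fintype J] [DecidableEq J]
    (Z : Matrix m J ℂ) (e : J → m) (he : (Z.submatrix e id).det ≠ 0) :
    ‖(Z.submatrix e id).det‖ ^ 2 ≤ (Zᴴ * Z).det.re := by
  set N := Z.submatrix e id with hN
  have hinj : Function.Injective e := by
    intro a b hab
    by_contra hne
    exact he (det_zero_of_row_eq hne (by ext k; simp [hN, hab]))
  have hNu : IsUnit N.det := isUnit_iff_ne_zero.mpr he
  set R : Matrix m J ℂ := fun l a => if l ∈ Set.range e then 0 else Z l a with hR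
  have h1 : Zᴴ * Z = Nᴴ * N + Rᴴ * R := by
    ext a b
    simp only [Matrix.mul_apply, Matrix.add_apply, conjTranspose_apply]
    have h2 : ∑ k, star (N k a) * N k b = ∑ l, if l ∈ Set.range e then star (Z l a) * Z l b else 0 := by
      classical
      have h3 := Finset.sum_image (s := Finset.univ) (g := e)
        (f := fun l => star (Z l a) * Z l b) (fun x _ y _ h => hinj h)
      refine h3.symm.trans ?_
      rw [← Finset.sum_filter]
      congr 1
      ext l; simp
    rw [h2, ← Finset.sum_add_distrib]
    refine Finset.sum_congr rfl fun l _ => ?_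
    by_cases hl : l ∈ Set.range e
    · simp only [hR, if_pos hl]; simp
    · simp only [hR, if_neg hl]; simp
  have h4 : Zᴴ * Z = Nᴴ * (1 + (R * N⁻¹)ᴴ * (R * N⁻¹)) * N := by
    have h5 : N⁻¹ * N = 1 := nonsing_inv_mul N hNu
    have h6 : Nᴴ * (N⁻¹)ᴴ = 1 := by rw [← conjTranspose_mul, h5, conjTranspose_one]
    rw [h1, Matrix.mul_add, Matrix.add_mul, Matrix.mul_one, conjTranspose_mul]
    congr 1
    calc Rᴴ * R = (Nᴴ * (N⁻¹)ᴴ) * (Rᴴ * R) * (N⁻¹ * N) := by rw [h5, h6, Matrix.one_mul, Matrix.mul_one]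
      _ = _ := by simp only [Matrix.mul_assoc]
  obtain ⟨hd1, hd2⟩ := one_le_det_one_add ((R * N⁻¹)ᴴ * (R * N⁻¹)) (posSemidef_conjTranspose_mul_self _)
  rw [h4, det_mul, det_mul, det_conjTranspose]
  set d := (1 + (R * N⁻¹)ᴴ * (R * N⁻¹)).det
  have h7 : star N.det * d * N.det = ((‖N.det‖ ^ 2 : ℝ) : ℂ) * d := by
    have : star N.det * N.det = ((‖N.det‖ ^ 2 : ℝ) : ℂ) := by
      rw [Complex.ofReal_pow]; exact Complex.conj_mul' N.det
    rw [← this]; ring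
  rw [h7, Complex.re_ofReal_mul]
  nlinarith [sq_nonneg ‖N.det‖]

theorem exists_minor {m J : Type*} [Fintype m] [DecidableEq m] [Fintype J] [DecidableEq J]
    (Z : Matrix m J ℂ) (h : (Zᴴ * Z).det ≠ 0) : ∃ e : J → m, (Z.submatrix e id).det ≠ 0 := by
  by_contra! hall
  apply h
  have h1 : (Zᴴ * Z).det = detRowAlternating (fun a => ∑ l, star (Z l a) • Z l) := by
    change detRowAlternating (Zᴴ * Z) = _
    congr 1
    ext a b
    simp [Matrix.mul_apply]
  rw [h1]
  have h2 := (detRowAlternating (n := J) (R := ℂ)).toMultilinearMap.map_sum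
    (fun (a : J) (l : m) => star (Z l a) • Z l)
  refine h2.trans (Finset.sum_eq_zero fun e _ => ?_)
  have h3 := (detRowAlternating (n := J) (R := ℂ)).toMultilinearMap.map_smul_univ
    (fun a => star (Z (e a) a)) (fun a => Z (e a))
  refine h3.trans ?_
  have : (detRowAlternating (n := J) (R := ℂ)).toMultilinearMap (fun a => Z (e a)) = 0 := hall e
  rw [this, smul_zero]

/-- Vectors vanishing on coordinates `< k`. -/
def tailSub {n : ℕ} (k : Fin n) : Submodule ℂ (Fin n → ℂ) where
  carrier := {v | ∀ l, l < k → v l = 0}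
  add_mem' := fun {a b} ha hb k hk => by simp [ha k hk, hb k hk]
  zero_mem' := fun k _ => rfl
  smul_mem' := fun c v hv k hk => by simp [hv k hk]

theorem finrank_tailSub_le {n : ℕ} (k : Fin n) :
    Module.finrank ℂ (tailSub k) ≤ Fintype.card {l : Fin n // k ≤ l} := by
  let f : tailSub k →ₗ[ℂ] ({l : Fin n // k ≤ l} → ℂ) :=
    { toFun := fun v l => v.1 l.1
      map_add' := fun _ _ => rfl
      map_smul' := fun _ _ => rfl }
  have hf : Function.Injective f := by
    intro v w hvw
    ext l
    rcases lt_or_ge l k with hl | hl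
    · rw [v.2 l hl, w.2 l hl]
    · exact congrFun hvw ⟨l, hl⟩
  simpa using LinearMap.finrank_le_finrank_of_injective hf

theorem exists_greedy_minor {n : ℕ} {J : Type*} [Fintype J] [DecidableEq J]
    (Z : Matrix (Fin n) J ℂ) (h : (Zᴴ * Z).det ≠ 0) :
    ∃ e : J → Fin n, (Z.submatrix e id).det ≠ 0 ∧
      ∀ k, Fintype.card {a // k ≤ e a} ≤
        Module.finrank ℂ (tailSub k ⊓ LinearMap.range Z.mulVecLin : Submodule ℂ (Fin n → ℂ)) := by
  obtain ⟨e, he, hmin⟩ := (Set.toFinite {e : J → Fin n | (Z.submatrix e id).det ≠ 0}).exists_minimalFor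
    (fun e => ∑ a, (e a : ℕ)) _ (exists_minor Z h)
  refine ⟨e, he, fun k => ?_⟩
  set N := Z.submatrix e id with hN
  have hNu : IsUnit N.det := isUnit_iff_ne_zero.mpr he
  set C := Z * N⁻¹ with hC
  have hCN : C * N = Z := by rw [hC, Matrix.mul_assoc, nonsing_inv_mul N hNu, Matrix.mul_one]
  have hC1 : C.submatrix e id = 1 := by
    have : C.submatrix e id = N * N⁻¹ := by
      ext a b; simp [hC, hN, Matrix.mul_apply]
    rw [this, mul_nonsing_inv N hNu]
  have hCe : ∀ a b, C (e a) b = if a = b then 1 else 0 := by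
    intro a b
    have := congrFun (congrFun hC1 a) b
    simpa [Matrix.one_apply] using this
  have hkey : ∀ l a, C l a ≠ 0 → e a ≤ l := by
    intro l a hla
    by_contra! hlt
    have h1 : (Z.submatrix (Function.update e a l) id) = (updateRow 1 a (C l)) * N := by
      have : updateRow 1 a (C l) = C.submatrix (Function.update e a l) id := by
        ext b d
        by_cases hb : b = a
        · subst hb; simp
        · simp [hb, hCe, Matrix.one_apply]
      rw [this]
      ext b d
      conv_lhs => rw [← hCN]
      simp [Matrix.mul_apply]
    have h2 : (Z.submatrix (Function.update e a l) id).det ≠ 0 := by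
      rw [h1, det_mul, ← cramer_transpose_apply, transpose_one, cramer_one]
      exact mul_ne_zero hla he
    have h3 : ∑ b, ((Function.update e a l) b : ℕ) < ∑ b, (e b : ℕ) := by
      refine Finset.sum_lt_sum (fun b _ => ?_) ⟨a, Finset.mem_univ _, by simpa using hlt⟩
      by_cases hb : b = a
      · subst hb; simpa using hlt.le
      · simp [hb]
    exact absurd (hmin h2 h3.le) (not_le.mpr h3)
  have hmem : ∀ a : {a // k ≤ e a}, (fun l => C l a) ∈
      (tailSub k ⊓ LinearMap.range Z.mulVecLin : Submodule ℂ (Fin n → ℂ)) := by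
    rintro ⟨a, ha⟩
    refine ⟨fun l hl => ?_, ⟨fun b => N⁻¹ b a, ?_⟩⟩
    · by_contra hne
      exact absurd (hkey l a hne) (not_le.mpr (hl.trans_le ha))
    · ext l; simp [hC, Matrix.mul_apply, mulVec, dotProduct]
  have hli : LinearIndependent ℂ (fun a : {a // k ≤ e a} => (⟨_, hmem a⟩ :
      (tailSub k ⊓ LinearMap.range Z.mulVecLin : Submodule ℂ (Fin n → ℂ)))) := by
    rw [Fintype.linearIndependent_iff]
    intro g hg a
    have h1 := congrFun (congrArg Subtype.val hg) (e a)
    simp only [Submodule.coe_sum, Submodule.coe_smul, Finset.sum_apply, Pi.smul_apply, hCe,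
      smul_eq_mul, ZeroMemClass.coe_zero, Pi.zero_apply] at h1
    simpa [← Subtype.ext_iff] using h1
  exact hli.fintype_card_le_finrank

/-- Squared volume of the first `j+1` columns of `M`. -/
noncomputable def GG {n : ℕ} (j : Fin n) (M : Matrix (Fin n) (Fin n) ℂ) : ℝ :=
  ((Mᴴ * M).submatrix (Subtype.val : {k : Fin n // k ≤ j} → Fin n) Subtype.val).det.re

/-- First `j+1` columns. -/
def colsJ {n : ℕ} (j : Fin n) (M : Matrix (Fin n) (Fin n) ℂ) : Matrix (Fin n) {k : Fin n // k ≤ j} ℂ :=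
  M.submatrix id Subtype.val

theorem gram_colsJ {n : ℕ} (j : Fin n) (M : Matrix (Fin n) (Fin n) ℂ) :
    (Mᴴ * M).submatrix (Subtype.val : {k : Fin n // k ≤ j} → Fin n) Subtype.val =
      (colsJ j M)ᴴ * colsJ j M := by
  ext a b; simp [colsJ, Matrix.mul_apply]

theorem gram_posDef {n : ℕ} (M : Matrix (Fin n) (Fin n) ℂ) (hM : IsUnit M.det) :
    (Mᴴ * M).PosDef := by
  refine PosDef.conjTranspose_mul_self M ?_
  exact mulVec_injective_of_isUnit ((isUnit_iff_isUnit_det M).mpr hM)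

theorem gramJ_det_pos {n : ℕ} (j : Fin n) (M : Matrix (Fin n) (Fin n) ℂ) (hM : IsUnit M.det) :
    0 < ((Mᴴ * M).submatrix (Subtype.val : {k : Fin n // k ≤ j} → Fin n) Subtype.val).det :=
  ((gram_posDef M hM).submatrix Subtype.val_injective).det_pos

theorem GG_pos {n : ℕ} (j : Fin n) (M : Matrix (Fin n) (Fin n) ℂ) (hM : IsUnit M.det) :
    0 < GG j M := (Complex.pos_iff.mp (gramJ_det_pos j M hM)).1

theorem range_colsJ {n : ℕ} (j : Fin n) (M : Matrix (Fin n) (Fin n) ℂ) :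
    LinearMap.range (colsJ j M).mulVecLin ≤ flagSub M j := by
  rintro _ ⟨w, rfl⟩
  refine ⟨fun k => if h : k ≤ j then w ⟨k, h⟩ else 0, fun k hk => by simp [not_le.mpr hk], ?_⟩
  ext l
  simp only [mulVecLin_apply, mulVec, dotProduct, colsJ, submatrix_apply, id]
  have := Finset.sum_subtype (F := inferInstance) (Finset.univ.filter (fun k : Fin n => k ≤ j)) (p := fun k => k ≤ j)
    (by simp) (fun k => M l k * (if h : k ≤ j then w ⟨k, h⟩ else 0))
  rw [Finset.sum_filter] at this
  refine (Eq.trans ?_ this).trans ?_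
  · refine Finset.sum_congr rfl fun k _ => ?_
    split_ifs <;> simp
  · refine Finset.sum_congr rfl fun k _ => ?_
    rw [dif_pos k.2]

theorem log_GG_lower {n : ℕ} (j : Fin n) (g x W : Matrix (Fin n) (Fin n) ℂ) (θ : Fin n → ℝ)
    (hθ : ∀ k, 0 < θ k) (hg : gᴴ * g = W * diagonal (fun k => (θ k : ℂ)) * Wᴴ)
    (e : {k : Fin n // k ≤ j} → Fin n) (he : ((colsJ j (Wᴴ * x)).submatrix e id).det ≠ 0) :
    ∑ a, Real.log (θ (e a)) + Real.log (‖((colsJ j (Wᴴ * x)).submatrix e id).det‖ ^ 2) ≤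
      Real.log (GG j (g * x)) := by
  set N := (colsJ j (Wᴴ * x)).submatrix e id with hN
  set D : Matrix (Fin n) (Fin n) ℂ := diagonal (fun k => ((Real.sqrt (θ k) : ℝ) : ℂ)) with hD
  have hDD : Dᴴ * D = diagonal (fun k => (θ k : ℂ)) := by
    rw [hD, diagonal_conjTranspose, diagonal_mul_diagonal]
    congr 1; ext k
    simp only [Pi.star_apply, RCLike.star_def, Complex.conj_ofReal]
    rw [← Complex.ofReal_mul, Real.mul_self_sqrt (hθ k).le]
  have h1 : (g * x)ᴴ * (g * x) = (D * (Wᴴ * x))ᴴ * (D * (Wᴴ * x)) := by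
    calc (g * x)ᴴ * (g * x) = xᴴ * (gᴴ * g) * x := by
          rw [conjTranspose_mul]; simp only [mul_assoc]
      _ = xᴴ * (W * (Dᴴ * D) * Wᴴ) * x := by rw [hg, hDD]
      _ = _ := by simp only [conjTranspose_mul, conjTranspose_conjTranspose, mul_assoc]
  have h2 : GG j (g * x) = ((colsJ j (D * (Wᴴ * x)))ᴴ * colsJ j (D * (Wᴴ * x))).det.re := by
    unfold GG; rw [h1, gram_colsJ]
  have h3 : (colsJ j (D * (Wᴴ * x))).submatrix e id =
      diagonal (fun a => ((Real.sqrt (θ (e a)) : ℝ) : ℂ)) * N := by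
    ext a b
    simp [colsJ, hD, hN, diagonal_mul]
  have h4 : ((colsJ j (D * (Wᴴ * x))).submatrix e id).det =
      ((∏ a, Real.sqrt (θ (e a)) : ℝ) : ℂ) * N.det := by
    rw [h3, det_mul, det_diagonal]; push_cast; rfl
  have hpos : 0 < ∏ a, Real.sqrt (θ (e a)) := Finset.prod_pos fun a _ => Real.sqrt_pos.mpr (hθ _)
  have h5 := minor_le_gram (colsJ j (D * (Wᴴ * x))) e (by
    rw [h4]; exact mul_ne_zero (by exact_mod_cast hpos.ne') he)
  rw [← h2, h4, norm_mul, Complex.norm_real, Real.norm_of_nonneg hpos.le, mul_pow,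
    ← Finset.prod_pow] at h5
  simp only [Real.sq_sqrt (hθ _).le] at h5
  have hNp : 0 < ‖N.det‖ ^ 2 := by positivity
  have hP : 0 < ∏ a, θ (e a) := Finset.prod_pos fun a _ => hθ _
  rw [← Real.log_prod (fun a _ => (hθ _).ne'), ← Real.log_mul hP.ne' hNp.ne']
  exact Real.log_le_log (mul_pos hP hNp) h5

theorem sum_ind_card {n : ℕ} {J : Type*} [Fintype J] (e : J → Fin n) (τ : ℝ) (δ t : Fin n → ℝ)
    (h : ∀ l, t l = τ - (∑ k, δ k * (if k ≤ l then 1 else 0))) :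
    ∑ a, t (e a) = Fintype.card J * τ - ∑ k, δ k * (Fintype.card {a // k ≤ e a} : ℝ) := by
  simp only [h, Finset.sum_sub_distrib, Finset.sum_const, Finset.card_univ, nsmul_eq_mul]
  rw [Finset.sum_comm]
  congr 1
  refine Finset.sum_congr rfl fun k _ => ?_
  rw [← Finset.mul_sum, Fintype.card_subtype, Finset.sum_boole]

theorem comb_bound {n r : ℕ} (c : Fin n → ℝ) (κ : ℝ)
    (hκ : ∑ j, c j * (Fintype.card {k : Fin n // k ≤ j} : ℝ) = n * κ)
    (e : Fin r → ∀ j : Fin n, {k : Fin n // k ≤ j} → Fin n)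
    (hstar : ∀ k, ∑ i, ∑ j, c j * (Fintype.card {a // k ≤ e i j a} : ℝ) ≤
      r * (κ * (Fintype.card {l : Fin n // k ≤ l} : ℝ)))
    (t : Fin n → ℝ) (ht : Antitone t) :
    r * κ * ∑ k, t k ≤ ∑ i, ∑ j, c j * ∑ a, t (e i j a) := by
  obtain ⟨δ, τ, hδ, h⟩ := abel_antitone' t ht
  have h1 : ∑ k, t k = n * τ - ∑ k, δ k * (Fintype.card {l : Fin n // k ≤ l} : ℝ) := by
    have := sum_ind_card (fun l : Fin n => l) τ δ t h
    simpa using this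
  have h2 : ∑ i, ∑ j, c j * ∑ a, t (e i j a) = r * (n * κ) * τ -
      ∑ k, δ k * ∑ i, ∑ j, c j * (Fintype.card {a // k ≤ e i j a} : ℝ) := by
    simp only [sum_ind_card _ τ δ t h, mul_sub, Finset.sum_sub_distrib]
    congr 1
    · simp only [← mul_assoc, ← Finset.sum_mul, hκ]
      simp [mul_assoc]
    · simp only [Finset.mul_sum]
      refine (Finset.sum_congr rfl fun i _ => Finset.sum_comm).trans (Finset.sum_comm.trans ?_)
      refine Finset.sum_congr rfl fun k _ => Finset.sum_congr rfl fun i _ =>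
        Finset.sum_congr rfl fun j _ => by ring
  rw [h1, h2]
  have h3 := Finset.sum_le_sum fun k (_ : k ∈ Finset.univ) => mul_le_mul_of_nonneg_left (hstar k) (hδ k)
  have h4 : ∑ k, δ k * (r * (κ * (Fintype.card {l : Fin n // k ≤ l} : ℝ))) =
      r * κ * ∑ k, δ k * (Fintype.card {l : Fin n // k ≤ l} : ℝ) := by
    rw [Finset.mul_sum]; exact Finset.sum_congr rfl fun k _ => by ring
  rw [h4] at h3
  nlinarith

theorem isCompact_unitary {n : ℕ} :
    IsCompact {U : Matrix (Fin n) (Fin n) ℂ | Uᴴ * U = 1} := by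
  have h1 : IsCompact {U : Fin n → Fin n → ℂ | ∀ a, U a ∈ {v : Fin n → ℂ | ∀ b, v b ∈ Metric.closedBall (0:ℂ) 1}} :=
    isCompact_pi_infinite fun a => isCompact_pi_infinite fun b => isCompact_closedBall _ _
  refine IsCompact.of_isClosed_subset (X := Matrix (Fin n) (Fin n) ℂ) h1 ?_ ?_
  · exact isClosed_eq (by fun_prop) continuous_const
  · intro U (hU : Uᴴ * U = 1) a b
    have h2 := congrFun (congrFun hU b) b
    simp only [Matrix.mul_apply, conjTranspose_apply, Matrix.one_apply_eq] at h2
    have h3 : ∑ l, ‖U l b‖ ^ 2 = 1 := by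
      have : ((∑ l, ‖U l b‖ ^ 2 : ℝ) : ℂ) = 1 := by
        rw [← h2]; push_cast
        exact Finset.sum_congr rfl fun l _ => (Complex.conj_mul' _).symm
      exact_mod_cast this
    have h4 : ‖U a b‖ ^ 2 ≤ 1 := by
      rw [← h3]
      exact Finset.single_le_sum (f := fun l => ‖U l b‖ ^ 2) (fun l _ => by positivity) (Finset.mem_univ a)
    rw [mem_closedBall_zero_iff]
    nlinarith [norm_nonneg (U a b)]

theorem exists_sorted_diag {n : ℕ} (A : Matrix (Fin n) (Fin n) ℂ) (hA : A.PosDef) :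
    ∃ (W : Matrix (Fin n) (Fin n) ℂ) (θ : Fin n → ℝ), Wᴴ * W = 1 ∧ (∀ k, 0 < θ k) ∧ Antitone θ ∧
      A = W * diagonal (fun k => (θ k : ℂ)) * Wᴴ := by
  have h := hA.1.spectral_theorem
  rw [Unitary.conjStarAlgAut_apply] at h
  set U : Matrix (Fin n) (Fin n) ℂ := (hA.1.eigenvectorUnitary : Matrix (Fin n) (Fin n) ℂ) with hUdef
  have hU : Uᴴ * U = 1 := Unitary.coe_star_mul_self _
  let σ : Equiv.Perm (Fin n) := Tuple.sort (fun k => - hA.1.eigenvalues k)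
  have hσ : Monotone ((fun k => - hA.1.eigenvalues k) ∘ σ) := Tuple.monotone_sort _
  refine ⟨U.submatrix id σ, fun k => hA.1.eigenvalues (σ k), ?_, fun k => hA.eigenvalues_pos _, ?_, ?_⟩
  · rw [conjTranspose_submatrix]
    have : (Uᴴ.submatrix σ id) * (U.submatrix id σ) = (Uᴴ * U).submatrix σ σ := by
      ext a b; simp [Matrix.mul_apply]
    rw [this, hU, submatrix_one_equiv]
  · intro a b hab
    have := hσ hab
    simpa using this
  · conv_lhs => rw [h]
    ext a b
    rw [Matrix.mul_apply, Matrix.mul_apply, ← Equiv.sum_comp σ]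
    refine Finset.sum_congr rfl fun k _ => ?_
    rw [mul_diagonal, mul_diagonal]
    rfl

/-- The Kempf-Ness type functional. -/
noncomputable def Phi {n r : ℕ} (c : Fin n → ℝ) (κ : ℝ) (x : Fin r → Matrix (Fin n) (Fin n) ℂ)
    (g : Matrix (Fin n) (Fin n) ℂ) : ℝ :=
  ∑ i, ∑ j, c j * Real.log (GG j (g * x i)) - r * κ * Real.log (‖g.det‖ ^ 2)

theorem exists_minors_family {n r : ℕ} (c : Fin n → ℝ) (κ : ℝ) (hc : ∀ j, 0 ≤ c j) (hκ0 : 0 ≤ κ)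
    (x : Fin r → Matrix (Fin n) (Fin n) ℂ) (hx : ∀ i, IsUnit (x i).det)
    (hss : ∀ V : Submodule ℂ (Fin n → ℂ),
        ∑ i, ∑ j, c j * (Module.finrank ℂ (V ⊓ flagSub (x i) j : Submodule ℂ (Fin n → ℂ)) : ℝ) ≤
          r * (κ * Module.finrank ℂ V))
    (W : Matrix (Fin n) (Fin n) ℂ) (hW : Wᴴ * W = 1) :
    ∃ e : Fin r → ∀ j : Fin n, {k : Fin n // k ≤ j} → Fin n,
      (∀ i j, ((colsJ j (Wᴴ * x i)).submatrix (e i j) id).det ≠ 0) ∧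
      ∀ k, ∑ i, ∑ j, c j * (Fintype.card {a // k ≤ e i j a} : ℝ) ≤
        r * (κ * (Fintype.card {l : Fin n // k ≤ l} : ℝ)) := by
  have hW' : W * Wᴴ = 1 := mul_eq_one_comm.mp hW
  have hu : ∀ i, IsUnit (Wᴴ * x i).det := fun i => by
    rw [det_mul]; exact (isUnit_det_of_left_inverse hW').mul (hx i)
  have hex : ∀ i j, ∃ e : {k : Fin n // k ≤ j} → Fin n,
      ((colsJ j (Wᴴ * x i)).submatrix e id).det ≠ 0 ∧ ∀ k, Fintype.card {a // k ≤ e a} ≤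
        Module.finrank ℂ (tailSub k ⊓ LinearMap.range (colsJ j (Wᴴ * x i)).mulVecLin :
          Submodule ℂ (Fin n → ℂ)) := fun i j =>
    exists_greedy_minor _ (by rw [← gram_colsJ]; exact (gramJ_det_pos j _ (hu i)).ne')
  choose e he1 he2 using hex
  refine ⟨e, he1, fun k => ?_⟩
  have hinj : Function.Injective W.mulVecLin :=
    mulVec_injective_of_isUnit ((isUnit_iff_isUnit_det W).mpr (isUnit_det_of_left_inverse hW))
  refine (Finset.sum_le_sum fun i _ => Finset.sum_le_sum fun j _ =>
    mul_le_mul_of_nonneg_left ?_ (hc j)).trans ((hss ((tailSub k).map W.mulVecLin)).trans ?_)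
  · refine Nat.cast_le.mpr ((he2 i j k).trans ?_)
    rw [(Submodule.equivMapOfInjective W.mulVecLin hinj _).finrank_eq]
    refine Submodule.finrank_mono ?_
    refine (Submodule.map_inf_le _).trans (inf_le_inf le_rfl ?_)
    refine (Submodule.map_mono (range_colsJ _ _)).trans ?_
    rintro _ ⟨_, ⟨w, hw, rfl⟩, rfl⟩
    refine ⟨w, hw, ?_⟩
    simp [← mul_assoc, hW']
  · refine mul_le_mul_of_nonneg_left (mul_le_mul_of_nonneg_left (Nat.cast_le.mpr ?_) hκ0) (Nat.cast_nonneg _)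
    exact (Submodule.finrank_map_le _ _).trans (finrank_tailSub_le k)

theorem Phi_bddBelow {n r : ℕ} (c : Fin n → ℝ) (κ : ℝ) (hc : ∀ j, 0 ≤ c j) (hκ0 : 0 ≤ κ)
    (hκ : ∑ j, c j * (Fintype.card {k : Fin n // k ≤ j} : ℝ) = n * κ)
    (x : Fin r → Matrix (Fin n) (Fin n) ℂ) (hx : ∀ i, IsUnit (x i).det)
    (hss : ∀ V : Submodule ℂ (Fin n → ℂ),
        ∑ i, ∑ j, c j * (Module.finrank ℂ (V ⊓ flagSub (x i) j : Submodule ℂ (Fin n → ℂ)) : ℝ) ≤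
          r * (κ * Module.finrank ℂ V)) :
    ∃ C : ℝ, ∀ g : Matrix (Fin n) (Fin n) ℂ, IsUnit g.det → C ≤ Phi c κ x g := by
  have key : ∃ C : ℝ, ∀ W ∈ {U : Matrix (Fin n) (Fin n) ℂ | Uᴴ * U = 1},
      ∀ g : Matrix (Fin n) (Fin n) ℂ, ∀ θ : Fin n → ℝ,
      (∀ k, 0 < θ k) → Antitone θ → gᴴ * g = W * diagonal (fun k => (θ k : ℂ)) * Wᴴ →
      Wᴴ * W = 1 → C ≤ Phi c κ x g := by
    refine isCompact_unitary.induction_on (p := fun s => ∃ C : ℝ, ∀ W ∈ s,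
      ∀ g : Matrix (Fin n) (Fin n) ℂ, ∀ θ : Fin n → ℝ,
      (∀ k, 0 < θ k) → Antitone θ → gᴴ * g = W * diagonal (fun k => (θ k : ℂ)) * Wᴴ →
      Wᴴ * W = 1 → C ≤ Phi c κ x g) ⟨0, fun W hW => hW.elim⟩ ?_ ?_ ?_
    · rintro s t hst ⟨C, hC⟩
      exact ⟨C, fun W hW => hC W (hst hW)⟩
    · rintro s t ⟨C, hC⟩ ⟨D, hD⟩
      refine ⟨min C D, fun W hW g θ h1 h2 h3 h4 => ?_⟩
      rcases hW with hW | hW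
      · exact (min_le_left _ _).trans (hC W hW g θ h1 h2 h3 h4)
      · exact (min_le_right _ _).trans (hD W hW g θ h1 h2 h3 h4)
    · intro W0 hW0
      obtain ⟨e, he1, he2⟩ := exists_minors_family c κ hc hκ0 x hx hss W0 hW0
      let f : Fin r → Fin n → Matrix (Fin n) (Fin n) ℂ → ℝ := fun i j W =>
        ‖((colsJ j (Wᴴ * x i)).submatrix (e i j) id).det‖
      have hf : ∀ i j, Continuous (f i j) := by
        intro i j
        refine Continuous.norm (Continuous.matrix_det ?_)
        refine Continuous.matrix_submatrix (Continuous.matrix_submatrix ?_ _ _) _ _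
        fun_prop
      have hpos : ∀ i j, 0 < f i j W0 := fun i j => norm_pos_iff.mpr (he1 i j)
      let s : Set (Matrix (Fin n) (Fin n) ℂ) := {W | ∀ i j, f i j W0 / 2 < f i j W}
      have hs : s ∈ nhds W0 := by
        have : ∀ᶠ W in nhds W0, ∀ i j, f i j W0 / 2 < f i j W := by
          rw [Filter.eventually_all]; intro i
          rw [Filter.eventually_all]; intro j
          exact (hf i j).continuousAt.eventually (lt_mem_nhds (half_lt_self (hpos i j)))
        exact this
      refine ⟨s, mem_nhdsWithin_of_mem_nhds hs, ∑ i, ∑ j, c j * Real.log ((f i j W0 / 2) ^ 2), ?_⟩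
      intro W hW g θ h1 h2 h3 h4
      have hanti : Antitone (fun k => Real.log (θ k)) := fun a b hab =>
        Real.log_le_log (h1 b) (h2 hab)
      have hcb := comb_bound c κ hκ e he2 _ hanti
      have hdet : Real.log (‖g.det‖ ^ 2) = ∑ k, Real.log (θ k) := by
        rw [← Real.log_prod (fun k _ => (h1 k).ne')]
        congr 1
        have h5 := congrArg det h3
        rw [det_mul, det_conjTranspose, det_mul_comm, ← mul_assoc, h4, one_mul, det_diagonal] at h5
        have h6 : star g.det * g.det = ((‖g.det‖ ^ 2 : ℝ) : ℂ) := by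
          rw [Complex.ofReal_pow]; exact Complex.conj_mul' g.det
        rw [h6] at h5
        exact_mod_cast h5
      unfold Phi
      rw [hdet]
      have hmain : ∑ i, ∑ j, c j * Real.log ((f i j W0 / 2) ^ 2) +
          ∑ i, ∑ j, c j * ∑ a, Real.log (θ (e i j a)) ≤ ∑ i, ∑ j, c j * Real.log (GG j (g * x i)) := by
        rw [← Finset.sum_add_distrib]
        refine Finset.sum_le_sum fun i _ => ?_
        rw [← Finset.sum_add_distrib]
        refine Finset.sum_le_sum fun j _ => ?_
        rw [← mul_add]
        refine mul_le_mul_of_nonneg_left ?_ (hc j)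
        have h7 := hW i j
        have h8 : 0 < f i j W0 / 2 := half_pos (hpos i j)
        have h9 := log_GG_lower j g (x i) W θ h1 h3 (e i j) (norm_pos_iff.mp (h8.trans h7))
        have h10 : Real.log ((f i j W0 / 2) ^ 2) ≤ Real.log (f i j W ^ 2) :=
          Real.log_le_log (by positivity) (by gcongr)
        have h11 : Real.log (f i j W ^ 2) =
          Real.log (‖((colsJ j (Wᴴ * x i)).submatrix (e i j) id).det‖ ^ 2) := rfl
        linarith
      linarith
  obtain ⟨C, hC⟩ := key
  refine ⟨C, fun g hg => ?_⟩
  obtain ⟨W, θ, hW, hθ, hanti, h⟩ := exists_sorted_diag _ (gram_posDef g hg)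
  exact hC W hW g θ hθ hanti h hW

theorem exists_triangular {n : ℕ} (M : Matrix (Fin n) (Fin n) ℂ) (hM : IsUnit M.det) :
    ∃ R : Matrix (Fin n) (Fin n) ℂ, (∀ a b, b < a → R a b = 0) ∧ (M * R)ᴴ * (M * R) = 1 := by
  have hS := gram_posDef M hM
  set L := LDL.lowerInv hS with hL
  have hD : LDL.diag hS = L * (Mᴴ * M) * Lᴴ := LDL.diag_eq_lowerInv_conj hS
  set d := LDL.diagEntries hS with hd
  have hLu : IsUnit L := isUnit_of_invertible L
  have hpd : (diagonal d).PosDef := by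
    have h1 : diagonal d = (Lᴴ)ᴴ * (Mᴴ * M) * Lᴴ := by
      rw [conjTranspose_conjTranspose]; exact hD
    rw [h1]
    refine hS.conjTranspose_mul_mul_same ?_
    refine mulVec_injective_of_isUnit ?_
    exact hLu.star
  have hdpos : ∀ k, 0 < d k := fun k => by
    have := hpd.diag_pos (i := k)
    simpa using this
  have hdre : ∀ k, 0 < (d k).re ∧ (d k : ℂ) = ((d k).re : ℂ) := fun k => by
    obtain ⟨h1, h2⟩ := Complex.pos_iff.mp (hdpos k)
    exact ⟨h1, Complex.ext (by simp) (by simp [← h2])⟩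
  set E : Matrix (Fin n) (Fin n) ℂ := diagonal (fun k => (((Real.sqrt (d k).re)⁻¹ : ℝ) : ℂ)) with hE
  refine ⟨Lᴴ * E, ?_, ?_⟩
  · intro a b hab
    rw [hE, mul_diagonal, conjTranspose_apply, hL, LDL.lowerInv_triangular hS hab]
    simp
  · have hEE : Eᴴ = E := by
      rw [hE, diagonal_conjTranspose]; congr 1; ext k; simp
    have : (M * (Lᴴ * E))ᴴ * (M * (Lᴴ * E)) = E * (L * (Mᴴ * M) * Lᴴ) * E := by
      simp only [conjTranspose_mul, conjTranspose_conjTranspose, hEE, mul_assoc]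
    rw [this, ← hD]
    change E * diagonal d * E = 1
    rw [hE, diagonal_mul_diagonal, diagonal_mul_diagonal, ← diagonal_one]
    congr 1; ext k
    obtain ⟨h1, h2⟩ := hdre k
    rw [h2, Complex.ofReal_re, ← Complex.ofReal_mul, ← Complex.ofReal_mul]
    have h3 := Real.sqrt_pos.mpr h1
    have h4 := Real.mul_self_sqrt h1.le
    rw [← Complex.ofReal_one]
    congr 1
    field_simp
    nlinarith

theorem GG_mul_triangular {n : ℕ} (j : Fin n) (N R : Matrix (Fin n) (Fin n) ℂ)
    (hR : ∀ a b, b < a → R a b = 0) :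
    GG j (N * R) = ‖(R.submatrix (Subtype.val : {k : Fin n // k ≤ j} → Fin n) Subtype.val).det‖ ^ 2 *
      GG j N := by
  set R' := R.submatrix (Subtype.val : {k : Fin n // k ≤ j} → Fin n) Subtype.val with hR'
  have h1 : colsJ j (N * R) = colsJ j N * R' := by
    ext a b
    simp only [colsJ, submatrix_apply, id, Matrix.mul_apply, hR']
    have := Finset.sum_subtype (F := inferInstance) (Finset.univ.filter (fun k : Fin n => k ≤ j))
      (p := fun k => k ≤ j) (by simp) (fun k => N a k * R k b)
    rw [Finset.sum_filter] at this
    refine Eq.trans ?_ this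
    refine Finset.sum_congr rfl fun k _ => ?_
    split_ifs with hk
    · rfl
    · rw [hR k b (b.2.trans_lt (not_le.mp hk)), mul_zero]
  unfold GG
  rw [gram_colsJ, gram_colsJ, h1, conjTranspose_mul]
  have h2 : R'ᴴ * (colsJ j N)ᴴ * (colsJ j N * R') = R'ᴴ * ((colsJ j N)ᴴ * colsJ j N) * R' := by
    simp only [Matrix.mul_assoc]
  rw [h2, det_mul, det_mul, det_conjTranspose]
  have h6 : star R'.det * R'.det = ((‖R'.det‖ ^ 2 : ℝ) : ℂ) := by
    rw [Complex.ofReal_pow]; exact Complex.conj_mul' R'.det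
  rw [mul_right_comm, h6, Complex.re_ofReal_mul]

theorem GG_unitary {n : ℕ} (j : Fin n) (U : Matrix (Fin n) (Fin n) ℂ) (hU : Uᴴ * U = 1) :
    GG j U = 1 := by
  unfold GG
  rw [hU, submatrix_one _ Subtype.val_injective, det_one, Complex.one_re]

theorem exists_unitary_log {n : ℕ} (M : Matrix (Fin n) (Fin n) ℂ) (hM : IsUnit M.det) :
    ∃ U : Matrix (Fin n) (Fin n) ℂ, Uᴴ * U = 1 ∧ ∀ g : Matrix (Fin n) (Fin n) ℂ, IsUnit g.det →
      ∀ j, Real.log (GG j (g * U)) = Real.log (GG j (g * M)) - Real.log (GG j M) := by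
  obtain ⟨R, hR, hU⟩ := exists_triangular M hM
  refine ⟨M * R, hU, fun g hg j => ?_⟩
  have h1 := GG_mul_triangular j M R hR
  rw [GG_unitary j _ hU] at h1
  have h2 := GG_mul_triangular j (g * M) R hR
  rw [← mul_assoc, h2]
  have hp := GG_pos j M hM
  have hp2 := GG_pos j (g * M) (by rw [det_mul]; exact hg.mul hM)
  set q := ‖(R.submatrix (Subtype.val : {k : Fin n // k ≤ j} → Fin n) Subtype.val).det‖ ^ 2
  have hq : q = (GG j M)⁻¹ := eq_inv_of_mul_eq_one_left h1.symm
  rw [hq, Real.log_mul (inv_ne_zero hp.ne') hp2.ne', Real.log_inv]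
  ring

theorem exists_minimizer {n r : ℕ} (c : Fin n → ℝ) (κ : ℝ)
    (x : Fin r → Matrix (Fin n) (Fin n) ℂ) (hx : ∀ i, IsUnit (x i).det)
    (hb : ∃ C : ℝ, ∀ g : Matrix (Fin n) (Fin n) ℂ, IsUnit g.det → C ≤ Phi c κ x g) :
    ∃ U : Fin r → Matrix (Fin n) (Fin n) ℂ, (∀ i, (U i)ᴴ * U i = 1) ∧
      ∀ g : Matrix (Fin n) (Fin n) ℂ, IsUnit g.det → 0 ≤ Phi c κ U g := by
  obtain ⟨C, hC⟩ := hb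
  set A : Set ℝ := (Phi c κ x) '' {g | IsUnit g.det} with hA
  have hAb : BddBelow A := ⟨C, by rintro _ ⟨g, hg, rfl⟩; exact hC g hg⟩
  have hAn : A.Nonempty := ⟨_, 1, by simp, rfl⟩
  have hstep : ∀ m : ℕ, ∃ U : Fin r → Matrix (Fin n) (Fin n) ℂ, (∀ i, (U i)ᴴ * U i = 1) ∧
      ∀ g : Matrix (Fin n) (Fin n) ℂ, IsUnit g.det → -(1 / ((m : ℝ) + 1)) ≤ Phi c κ U g := by
    intro m
    obtain ⟨_, ⟨gm, hgm, rfl⟩, hlt⟩ := exists_lt_of_csInf_lt hAn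
      (lt_add_of_pos_right (sInf A) (Nat.one_div_pos_of_nat (α := ℝ) (n := m)))
    choose U hU1 hU2 using fun i => exists_unitary_log (gm * x i)
      (by rw [det_mul]; exact IsUnit.mul hgm (hx i))
    refine ⟨U, hU1, fun g hg => ?_⟩
    have hgu : IsUnit (g * gm).det := by rw [det_mul]; exact hg.mul hgm
    have h1 : Phi c κ U g = Phi c κ x (g * gm) - Phi c κ x gm := by
      unfold Phi
      have h2 : Real.log (‖(g * gm).det‖ ^ 2) = Real.log (‖g.det‖ ^ 2) + Real.log (‖gm.det‖ ^ 2) := by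
        rw [det_mul, norm_mul, mul_pow, Real.log_mul]
        · exact pow_ne_zero _ (norm_ne_zero_iff.mpr hg.ne_zero)
        · exact pow_ne_zero _ (norm_ne_zero_iff.mpr (IsUnit.ne_zero hgm))
      rw [h2]
      simp only [hU2 _ g hg, mul_sub, Finset.sum_sub_distrib, mul_assoc]
      ring
    have h3 : sInf A ≤ Phi c κ x (g * gm) := csInf_le hAb ⟨_, hgu, rfl⟩
    rw [h1]; linarith
  choose U hU1 hU2 using hstep
  have hcomp : IsCompact {V : Fin r → Matrix (Fin n) (Fin n) ℂ | ∀ i, V i ∈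
      {U : Matrix (Fin n) (Fin n) ℂ | Uᴴ * U = 1}} := isCompact_pi_infinite fun _ => isCompact_unitary
  have : FirstCountableTopology (Matrix (Fin n) (Fin n) ℂ) :=
    inferInstanceAs (FirstCountableTopology (Fin n → Fin n → ℂ))
  obtain ⟨V, hV, φ, hφ, hlim⟩ := hcomp.tendsto_subseq (x := U) (fun m => hU1 m)
  refine ⟨V, hV, fun g hg => ?_⟩
  have hcont : Filter.Tendsto (fun m => Phi c κ (U (φ m)) g) Filter.atTop (nhds (Phi c κ V g)) := by
    unfold Phi
    refine Filter.Tendsto.sub ?_ tendsto_const_nhds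
    refine tendsto_finsetSum _ fun i _ => tendsto_finsetSum _ fun j _ => tendsto_const_nhds.mul ?_
    have hVu : IsUnit (V i).det := isUnit_det_of_left_inverse (hV i)
    refine Filter.Tendsto.log ?_ (GG_pos j (g * V i) (by rw [det_mul]; exact hg.mul hVu)).ne'
    have hi : Filter.Tendsto (fun m => U (φ m) i) Filter.atTop (nhds (V i)) :=
      (tendsto_pi_nhds.mp hlim) i
    have hGc : Continuous (fun M : Matrix (Fin n) (Fin n) ℂ => GG j (g * M)) := by
      unfold GG
      refine Complex.continuous_re.comp (Continuous.matrix_det (Continuous.matrix_submatrix ?_ _ _))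
      fun_prop
    exact (hGc.tendsto (V i)).comp hi
  have hz : Filter.Tendsto (fun m => -(1 / ((φ m : ℝ) + 1))) Filter.atTop (nhds 0) := by
    have := (tendsto_one_div_add_atTop_nhds_zero_nat (𝕜 := ℝ)).comp hφ.tendsto_atTop
    simpa using this.neg
  exact le_of_tendsto_of_tendsto' hz hcont fun m => hU2 _ g hg

theorem log_det_le {J : Type*} [Fintype J] [DecidableEq J] (A : Matrix J J ℂ) (hA : A.PosDef) :
    Real.log A.det.re ≤ A.trace.re - Fintype.card J := by
  have h1 : A.det.re = ∏ i, hA.1.eigenvalues i := by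
    rw [hA.1.det_eq_prod_eigenvalues]
    have : (∏ i, ((hA.1.eigenvalues i : ℝ) : ℂ)) = ((∏ i, hA.1.eigenvalues i : ℝ) : ℂ) := by push_cast; rfl
    exact (congrArg Complex.re this).trans (Complex.ofReal_re _)
  have h2 : A.trace.re = ∑ i, hA.1.eigenvalues i := by
    rw [hA.1.trace_eq_sum_eigenvalues]
    have : (∑ i, ((hA.1.eigenvalues i : ℝ) : ℂ)) = ((∑ i, hA.1.eigenvalues i : ℝ) : ℂ) := by push_cast; rfl
    exact (congrArg Complex.re this).trans (Complex.ofReal_re _)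
  rw [h1, h2, Real.log_prod (fun i _ => (hA.eigenvalues_pos i).ne')]
  have h3 : (Fintype.card J : ℝ) = ∑ i : J, (1 : ℝ) := by simp
  rw [h3, ← Finset.sum_sub_distrib]
  exact Finset.sum_le_sum fun i _ => Real.log_le_sub_one_of_pos (hA.eigenvalues_pos i)

theorem trace_submatrix_std {n : ℕ} (j : Fin n) (X : Matrix (Fin n) (Fin n) ℂ) :
    (X.submatrix (Subtype.val : {k : Fin n // k ≤ j} → Fin n) Subtype.val).trace =
      (stdProj j * X).trace := by
  have := Finset.sum_subtype (F := inferInstance) (Finset.univ.filter (fun k : Fin n => k ≤ j))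
    (p := fun k => k ≤ j) (by simp) (fun k => X k k)
  rw [Finset.sum_filter] at this
  refine Eq.trans this.symm ?_
  simp only [Matrix.trace, Matrix.diag_apply, stdProj, diagonal_mul]
  exact Finset.sum_congr rfl fun k _ => by split_ifs <;> simp

theorem log_GG_upper {n : ℕ} (j : Fin n) (U S : Matrix (Fin n) (Fin n) ℂ) (hU : Uᴴ * U = 1)
    (hS : Sᴴ = S) (s : ℝ) (hs : IsUnit (1 + (s : ℂ) • S).det) :
    Real.log (GG j ((1 + (s : ℂ) • S) * U)) ≤
      2 * s * (stdProj j * (Uᴴ * S * U)).trace.re + s ^ 2 * (stdProj j * (Uᴴ * (S * S) * U)).trace.re := by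
  have hu : IsUnit ((1 + (s : ℂ) • S) * U).det := by
    rw [det_mul]; exact hs.mul (isUnit_det_of_left_inverse hU)
  have h1 := log_det_le _ ((gram_posDef _ hu).submatrix
    (Subtype.val_injective : Function.Injective (Subtype.val : {k : Fin n // k ≤ j} → Fin n)))
  refine h1.trans (le_of_eq ?_)
  have h2 : ((1 + (s : ℂ) • S) * U)ᴴ * ((1 + (s : ℂ) • S) * U) =
      1 + ((2 * s : ℝ) : ℂ) • (Uᴴ * S * U) + ((s ^ 2 : ℝ) : ℂ) • (Uᴴ * (S * S) * U) := by
    have h3 : (1 + (s : ℂ) • S)ᴴ = 1 + (s : ℂ) • S := by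
      simp [conjTranspose_add, conjTranspose_smul, hS]
    rw [conjTranspose_mul, h3]
    calc Uᴴ * (1 + (s : ℂ) • S) * ((1 + (s : ℂ) • S) * U)
        = Uᴴ * ((1 + (s : ℂ) • S) * (1 + (s : ℂ) • S)) * U := by simp only [mul_assoc]
      _ = Uᴴ * (1 + ((2 * s : ℝ) : ℂ) • S + ((s ^ 2 : ℝ) : ℂ) • (S * S)) * U := by
          congr 2
          simp only [mul_add, add_mul, one_mul, mul_one, smul_mul_assoc, mul_smul_comm, smul_add, smul_smul]
          push_cast
          rw [two_mul, add_smul, pow_two]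
          abel
      _ = _ := by
          simp only [mul_add, add_mul, mul_one, hU, smul_mul_assoc, mul_smul_comm]
  rw [h2, submatrix_add, submatrix_add, submatrix_smul, submatrix_smul]
  simp only [Pi.add_apply, Pi.smul_apply]
  rw [submatrix_one _ Subtype.val_injective, trace_add, trace_add, trace_smul, trace_smul,
    trace_submatrix_std, trace_submatrix_std, trace_one]
  simp only [Complex.add_re, smul_eq_mul, Complex.re_ofReal_mul, Complex.natCast_re]
  ring

theorem critical {n r : ℕ} (lam c : Fin n → ℝ) (κ : ℝ) (hc : ∀ j, 0 ≤ c j)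
    (h : ∀ k, lam k = (∑ j, c j * (if k ≤ j then 1 else 0)) - κ) (hsum : ∑ i, lam i = 0)
    (U : Fin r → Matrix (Fin n) (Fin n) ℂ) (hU : ∀ i, (U i)ᴴ * U i = 1)
    (hPhi : ∀ g : Matrix (Fin n) (Fin n) ℂ, IsUnit g.det → 0 ≤ Phi c κ U g) :
    ∑ i, U i * diagonal (fun k => (lam k : ℂ)) * (U i)ᴴ = 0 := by
  set S := ∑ i, U i * diagonal (fun k => (lam k : ℂ)) * (U i)ᴴ with hSdef
  have hSH : Sᴴ = S := by
    rw [hSdef, conjTranspose_sum]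
    refine Finset.sum_congr rfl fun i _ => ?_
    rw [conjTranspose_mul, conjTranspose_mul, conjTranspose_conjTranspose, diagonal_conjTranspose,
      ← mul_assoc]
    congr 3; ext k; simp
  have htr : S.trace = 0 := by
    rw [hSdef, trace_sum]
    refine Finset.sum_eq_zero fun i _ => ?_
    rw [trace_mul_comm, ← mul_assoc, hU, one_mul, trace_diagonal]
    exact_mod_cast hsum
  set T : ℝ := (S * S).trace.re with hT
  set K : ℝ := ∑ i, ∑ j, c j * (stdProj j * ((U i)ᴴ * (S * S) * U i)).trace.re with hK
  have hTsum : ∑ i, ∑ j, c j * (stdProj j * ((U i)ᴴ * S * U i)).trace.re = T := by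
    have h1 : ∀ i, ∑ j, c j * (stdProj j * ((U i)ᴴ * S * U i)).trace.re =
        ((U i * diagonal (fun k => (lam k : ℂ)) * (U i)ᴴ) * S).trace.re + κ * S.trace.re := by
      intro i
      have h2 : ((U i * diagonal (fun k => (lam k : ℂ)) * (U i)ᴴ) * S).trace =
          (diagonal (fun k => (lam k : ℂ)) * ((U i)ᴴ * S * U i)).trace := by
        rw [mul_assoc, mul_assoc, trace_mul_comm]; simp only [mul_assoc]
      have h3 : ((U i)ᴴ * S * U i).trace = S.trace := by
        rw [trace_mul_comm, ← mul_assoc, mul_eq_one_comm.mp (hU i), one_mul]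
      rw [h2, diag_decomp lam c κ h, sub_mul, trace_sub, Finset.sum_mul, trace_sum]
      simp only [smul_mul_assoc, trace_smul, one_mul, h3, Complex.sub_re, Complex.re_sum, smul_eq_mul,
        Complex.re_ofReal_mul]
      ring
    simp only [h1, htr, Complex.zero_re, mul_zero, add_zero]
    rw [← Complex.re_sum, ← trace_sum, ← Finset.sum_mul, ← hSdef]
  clear_value S
  let d : ℝ → ℂ := fun s => (1 + (s : ℂ) • S).det
  let q := (det (1 + (Polynomial.X : Polynomial ℂ) • S.map Polynomial.C)).divX.divX
  have hd : d = fun s : ℝ => 1 + q.eval (s : ℂ) * (s : ℂ) ^ 2 := by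
    ext s
    change (1 + (s : ℂ) • S).det = _
    rw [det_one_add_smul, htr, zero_mul, add_zero]
  have hd0 : d 0 = 1 := by simp [d]
  have hdd : HasDerivAt d 0 0 := by
    rw [hd]
    have h1 : HasDerivAt (fun z : ℂ => 1 + q.eval z * z ^ 2) 0 ((0 : ℝ) : ℂ) := by
      have := ((q.hasDerivAt ((0 : ℝ) : ℂ)).mul ((hasDerivAt_id ((0 : ℝ) : ℂ)).pow 2)).const_add 1
      simpa using this
    exact h1.comp_ofReal
  have hlog : HasDerivAt (fun s => Real.log (‖d s‖ ^ 2)) 0 0 := by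
    have := hdd.norm_sq.log (by simp [hd0])
    simpa using this
  let F : ℝ → ℝ := fun s => 2 * s * T + s ^ 2 * K - r * κ * Real.log (‖d s‖ ^ 2)
  have hF : HasDerivAt F (2 * T) 0 := by
    have h1 := ((((hasDerivAt_id (0:ℝ)).const_mul 2).mul_const T).add
      (((hasDerivAt_id (0:ℝ)).pow 2).mul_const K)).sub (hlog.const_mul (r * κ))
    have h2 : 2 * 1 * T + (((2 : ℕ) : ℝ) * id (0:ℝ) ^ (2 - 1) * 1) * K - r * κ * 0 = 2 * T := by simp
    rw [← h2]
    exact h1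
  have hF0 : F 0 = 0 := by simp [F, hd0]
  have hmin : IsLocalMin F 0 := by
    have hne : ∀ᶠ s in nhds (0:ℝ), d s ≠ 0 := hdd.continuousAt.eventually_ne (by simp [hd0])
    filter_upwards [hne] with s hs
    rw [hF0]
    have hs' : IsUnit (1 + (s : ℂ) • S).det := isUnit_iff_ne_zero.mpr hs
    refine (hPhi _ hs').trans ?_
    unfold Phi
    have h1 : ∑ i, ∑ j, c j * Real.log (GG j ((1 + (s : ℂ) • S) * U i)) ≤ 2 * s * T + s ^ 2 * K := by
      rw [← hTsum, hK, Finset.mul_sum, Finset.mul_sum, ← Finset.sum_add_distrib]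
      refine Finset.sum_le_sum fun i _ => ?_
      rw [Finset.mul_sum, Finset.mul_sum, ← Finset.sum_add_distrib]
      refine Finset.sum_le_sum fun j _ => ?_
      refine (mul_le_mul_of_nonneg_left (log_GG_upper j (U i) S (hU i) hSH s hs') (hc j)).trans
        (le_of_eq (by ring))
    exact sub_le_sub_right h1 _
  have hT0 : T = 0 := by
    have := hmin.hasDerivAt_eq_zero hF
    linarith
  have hps : (Sᴴ * S).PosSemidef := posSemidef_conjTranspose_mul_self S
  have h5 : (Sᴴ * S).trace = 0 := by
    have h6 := Complex.nonneg_iff.mp hps.trace_nonneg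
    refine Complex.ext ?_ h6.2.symm
    rw [hSH]; exact hT0
  exact (trace_conjTranspose_mul_self_eq_zero_iff).mp h5

theorem main_forward {n r : ℕ} (hn : 2 ≤ n) (lam : Fin n → ℝ) (hmono : Antitone lam)
    (hsum : ∑ i, lam i = 0) (hr : 1 ≤ r)
    (p : Fin r → ℝ) (hp : ∀ i, 0 ≤ p i) (hp1 : ∑ i, p i = 1)
    (U : Fin r → Matrix (Fin n) (Fin n) ℂ) (hU : ∀ i, (U i)ᴴ * U i = 1)
    (h0 : ∑ i, (p i : ℂ) • (U i * diagonal (fun k => (lam k : ℂ)) * (U i)ᴴ) = 0) :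
    ∃ A : Fin r → Matrix (Fin n) (Fin n) ℂ, (∀ i, A i ∈ coadjointOrbit lam) ∧ ∑ i, A i = 0 := by
  obtain ⟨c, κ, hc, h⟩ := abel_antitone lam hmono
  have hκ : ∑ j, c j * (Fintype.card {k : Fin n // k ≤ j} : ℝ) = n * κ := by
    have h1 : ∑ k, lam k = (∑ j, c j * (Fintype.card {k : Fin n // k ≤ j} : ℝ)) - n * κ := by
      simp only [h, Finset.sum_sub_distrib, Finset.sum_const, Finset.card_univ, nsmul_eq_mul,
        Fintype.card_fin]
      rw [Finset.sum_comm]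
      congr 1
      refine Finset.sum_congr rfl fun j _ => ?_
      rw [← Finset.mul_sum, Fintype.card_subtype, Finset.sum_boole]
    linarith
  have hnp : (0 : ℝ) < n := by exact_mod_cast (by omega : 0 < n)
  have hκ0 : 0 ≤ κ := by
    have h2 : 0 ≤ n * κ := by
      rw [← hκ]; exact Finset.sum_nonneg fun j _ => mul_nonneg (hc j) (Nat.cast_nonneg _)
    exact nonneg_of_mul_nonneg_right h2 hnp
  obtain ⟨x, hx, hss⟩ := generic_semistable hr lam c κ hc h p hp hp1 U hU h0
  obtain ⟨V, hV, hPhi⟩ := exists_minimizer c κ x hx (Phi_bddBelow c κ hc hκ0 hκ x hx hss)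
  exact ⟨fun i => V i * diagonal (fun k => (lam k : ℂ)) * (V i)ᴴ,
    fun i => mem_orbit_of_unitary lam hsum (V i) (hV i),
    critical lam c κ hc h hsum V hV hPhi⟩

end

/-- `0 ∈ C_r(O_λ)` iff the zero matrix is a sum of `r` elements of `O_λ`. -/
theorem zero_mem_partialConvexHull_iff_zero_sum (n : ℕ) (hn : 2 ≤ n)
    (lam : Fin n → ℝ) (hmono : Antitone lam) (hsum : ∑ i, lam i = 0)
    (r : ℕ) (hr : 1 ≤ r) :
    (0 : Matrix (Fin n) (Fin n) ℂ) ∈ partialConvexHull r (coadjointOrbit lam) ↔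
      ∃ A : Fin r → Matrix (Fin n) (Fin n) ℂ,
        (∀ i, A i ∈ coadjointOrbit lam) ∧ ∑ i, A i = 0 := by
  constructor
  · rintro ⟨f, hf, h0⟩
    obtain ⟨p, hp, hp1, hp2⟩ := (hull_range_iff f 0).mp h0
    choose U hU1 hU2 using fun i => unitary_of_mem_orbit lam (f i) (hf i)
    refine main_forward hn lam hmono hsum hr p hp hp1 U hU1 ?_
    rw [← hp2]
    refine Finset.sum_congr rfl fun i _ => ?_
    rw [← hU2 i]
    ext a b
    simp
  · rintro ⟨A, hA, h0⟩
    refine ⟨A, hA, (hull_range_iff A 0).mpr ⟨fun _ => (r : ℝ)⁻¹, fun _ => by positivity, ?_, ?_⟩⟩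
    · have : (r : ℝ) ≠ 0 := by exact_mod_cast (by omega : r ≠ 0)
      simp [this]
    · rw [← Finset.smul_sum, h0, smul_zero]
end
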